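/- arXiv:1211.3766 — 2 statements merged into one kernel-verified Lean document; each statement's English description precedes it below -/
import Mathlib

section
/- Let n ≥ 1 and let Z ⊆ ℂ^n be a nonempty Zariski constructible subset defined over ℚ̄. Suppose that the image exp(Z) ⊆ (ℂ^*)^n is also a Zariski constructible subset defined over ℚ̄. Then exp(Z) contains a torsion point of (ℂ^*)^n. -/
open MvPolynomial

noncomputable section

/-- The coordinatewise exponential map `ℂ^n → (ℂ^*)^n`,
`z ↦ (e^{2π√-1 z_λ})_λ`. -/
def expMap (n : ℕ) (z : Fin n → ℂ) : Fin n → ℂ :=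
  fun i => Complex.exp (2 * (Real.pi : ℂ) * Complex.I * z i)

/-- A subset of `ℂ^n` is Zariski closed and defined over `ℚ̄` if it is the common
zero locus of a family of polynomials whose coefficients are algebraic over `ℚ`. -/
def ZClosedQbar (n : ℕ) (S : Set (Fin n → ℂ)) : Prop :=
  ∃ P : Set (MvPolynomial (Fin n) ℂ),
    (∀ p ∈ P, ∀ m, IsAlgebraic ℚ (coeff m p)) ∧
    S = {z | ∀ p ∈ P, eval z p = 0}

/-- A subset of `(ℂ^*)^n` (viewed as the set of points of `ℂ^n` with all coordinates
nonzero) is Zariski closed and defined over `ℚ̄` if it is the common zero locus in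
`(ℂ^*)^n` of a family of polynomials whose coefficients are algebraic over `ℚ`. -/
def ZClosedTorusQbar (n : ℕ) (T : Set (Fin n → ℂ)) : Prop :=
  ∃ P : Set (MvPolynomial (Fin n) ℂ),
    (∀ p ∈ P, ∀ m, IsAlgebraic ℚ (coeff m p)) ∧
    T = {z | (∀ i, z i ≠ 0) ∧ ∀ p ∈ P, eval z p = 0}

/-- Zariski constructible over `ℚ̄` in `ℂ^n`: a finite union of differences of
Zariski closed sets defined over `ℚ̄`. -/
def ConstructibleQbar (n : ℕ) (Z : Set (Fin n → ℂ)) : Prop :=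
  ∃ (k : ℕ) (F G : Fin k → Set (Fin n → ℂ)),
    (∀ i, ZClosedQbar n (F i) ∧ ZClosedQbar n (G i)) ∧ Z = ⋃ i, F i \ G i

/-- Zariski constructible over `ℚ̄` in `(ℂ^*)^n`. -/
def ConstructibleTorusQbar (n : ℕ) (Z : Set (Fin n → ℂ)) : Prop :=
  ∃ (k : ℕ) (F G : Fin k → Set (Fin n → ℂ)),
    (∀ i, ZClosedTorusQbar n (F i) ∧ ZClosedTorusQbar n (G i)) ∧ Z = ⋃ i, F i \ G i

/-- A torsion point of `(ℂ^*)^n`: every coordinate is a root of unity. -/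
def IsTorsionPoint (n : ℕ) (τ : Fin n → ℂ) : Prop :=
  ∀ i, ∃ k : ℕ, 0 < k ∧ τ i ^ k = 1


lemma spec_aux {k L : Type} [Field k] [IsAlgClosed k] [Field L] [Algebra k L] {n : ℕ}
    (z : Fin n → L) (j : Fin n) (hz : Transcendental k (z j))
    (g : MvPolynomial (Fin n) k) (hg : aeval z g ≠ 0) :
    ∃ h : Polynomial k, h ≠ 0 ∧ ∀ c, h.eval c ≠ 0 → ∃ z' : Fin n → k, z' j = c ∧
      aeval z' g ≠ 0 ∧ ∀ f : MvPolynomial (Fin n) k, aeval z f = 0 → aeval z' f = 0 := by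
  set s : Set L := Set.range z ∪ {(aeval z g)⁻¹} with hs
  have hsf : s.Finite := (Set.finite_range z).union (Set.finite_singleton _)
  let A : Subalgebra k L := Algebra.adjoin k s
  have hAft : Algebra.FiniteType k A :=
    (Subalgebra.fg_iff_finiteType A).1 (Subalgebra.fg_def.2 ⟨s, hsf, rfl⟩)
  let zA : Fin n → A := fun i => ⟨z i, Algebra.subset_adjoin (Or.inl ⟨i, rfl⟩)⟩
  let gi : A := ⟨(aeval z g)⁻¹, Algebra.subset_adjoin (Or.inr rfl)⟩
  have hval : ∀ f : MvPolynomial (Fin n) k, ((aeval zA f : A) : L) = aeval z f := by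
    intro f
    change A.val (aeval zA f) = _
    exact MvPolynomial.comp_aeval_apply (f := zA) A.val f
  have hgi : aeval zA g * gi = 1 := by
    apply Subtype.ext
    change ((aeval zA g : A) : L) * (aeval z g)⁻¹ = 1
    rw [hval, mul_inv_cancel₀ hg]
  let : Algebra (Polynomial k) A := (Polynomial.aeval (R := k) (zA j)).toRingHom.toAlgebra
  have hmap : ∀ p, algebraMap (Polynomial k) A p = Polynomial.aeval (zA j) p := fun p => rfl
  have : IsScalarTower k (Polynomial k) A := IsScalarTower.of_algebraMap_eq (fun x => by
    rw [hmap]; simp)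
  have hinj : Function.Injective (algebraMap (Polynomial k) A) := by
    rw [injective_iff_map_eq_zero]
    intro p hp
    rw [hmap] at hp
    by_contra hne
    apply hz
    refine ⟨p, hne, ?_⟩
    have h2 : A.val (Polynomial.aeval (zA j) p) = 0 := by rw [hp]; simp
    rw [← Polynomial.aeval_algHom_apply] at h2
    exact h2
  have : FaithfulSMul (Polynomial k) A := (faithfulSMul_iff_algebraMap_injective _ _).2 hinj
  have : Algebra.FiniteType (Polynomial k) A :=
    Algebra.FiniteType.of_restrictScalars_finiteType k (Polynomial k) A
  have : Algebra.FinitePresentation (Polynomial k) A :=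
    Algebra.FinitePresentation.of_finiteType.1 inferInstance
  have hopen := PrimeSpectrum.isOpenMap_comap_of_hasGoingDown_of_finitePresentation
    (R := Polynomial k) (S := A)
  have hU := hopen.isOpen_range
  have hmem : PrimeSpectrum.comap (algebraMap (Polynomial k) A) ⊥ ∈
    Set.range (PrimeSpectrum.comap (algebraMap (Polynomial k) A)) := ⟨_, rfl⟩
  obtain ⟨_, ⟨h, rfl⟩, hm, hsub⟩ :=
    (PrimeSpectrum.isTopologicalBasis_basic_opens (R := Polynomial k)).exists_subset_of_mem_open
      hmem hU
  refine ⟨h, ?_, ?_⟩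
  · rintro rfl
    simp at hm
  intro c hc
  let pc : PrimeSpectrum (Polynomial k) :=
    ⟨RingHom.ker (Polynomial.evalRingHom c), RingHom.ker_isPrime _⟩
  have hpc : pc ∈ (PrimeSpectrum.basicOpen h : Set (PrimeSpectrum (Polynomial k))) := by
    change h ∉ RingHom.ker (Polynomial.evalRingHom c)
    simpa [RingHom.mem_ker] using hc
  obtain ⟨P, hP⟩ := hsub hpc
  have hXc : zA j - algebraMap k A c ∈ P.asIdeal := by
    have : (Polynomial.X - Polynomial.C c) ∈ pc.asIdeal := by
      change _ ∈ RingHom.ker (Polynomial.evalRingHom c)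
      simp [RingHom.mem_ker]
    rw [← hP] at this
    change algebraMap (Polynomial k) A _ ∈ P.asIdeal at this
    simpa [hmap] using this
  obtain ⟨M, hM, hPM⟩ := Ideal.exists_le_maximal P.asIdeal P.isPrime.ne_top
  let : Field (A ⧸ M) := Ideal.Quotient.field M
  have : Algebra.FiniteType k (A ⧸ M) := inferInstance
  have : Module.Finite k (A ⧸ M) := finite_of_finite_type_of_isJacobsonRing k (A ⧸ M)
  have hbij := IsAlgClosed.algebraMap_bijective_of_isIntegral (k := k) (K := A ⧸ M)
  let e : k ≃ₐ[k] (A ⧸ M) := AlgEquiv.ofBijective (Algebra.ofId k (A ⧸ M)) hbij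
  let φ : A →ₐ[k] k := e.symm.toAlgHom.comp (Ideal.Quotient.mkₐ k M)
  have hφ0 : ∀ x ∈ M, φ x = 0 := by
    intro x hx
    change e.symm (Ideal.Quotient.mk M x) = 0
    rw [Ideal.Quotient.eq_zero_iff_mem.2 hx, map_zero]
  have hφf : ∀ f : MvPolynomial (Fin n) k, aeval (fun i => φ (zA i)) f = φ (aeval zA f) := by
    intro f
    exact (MvPolynomial.comp_aeval_apply (f := zA) φ f).symm
  refine ⟨fun i => φ (zA i), ?_, ?_, ?_⟩
  · have := hφ0 _ (hPM hXc)
    rw [map_sub, AlgHom.commutes] at this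
    simpa [sub_eq_zero] using this
  · rw [hφf]
    intro h0
    have := congrArg φ hgi
    rw [map_mul, h0, zero_mul, map_one] at this
    exact zero_ne_one this
  · intro f hf
    rw [hφf]
    have : aeval zA f = 0 := by
      apply Subtype.ext
      rw [hval, hf]; rfl
    rw [this, map_zero]

/-- specialization property, used for both sides -/
def SpecProp {n : ℕ} (S : Set (Fin n → ℂ)) : Prop :=
  ∀ z ∈ S, ∀ j, ¬ IsAlgebraic ℚ (z j) → ∃ T : Set ℂ, T.Finite ∧ ∀ c ∉ T, IsAlgebraic ℚ c →
    ∃ z' ∈ S, z' j = c ∧ ∀ i, IsAlgebraic ℚ (z i) → z' i = z i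

abbrev QB := algebraicClosure ℚ ℂ

lemma isAlgebraic_QB (x : QB) : IsAlgebraic ℚ (x : ℂ) := mem_algebraicClosure_iff.1 x.2

lemma QB_closed : IsAlgClosed QB :=
  (algebraicClosure.isAlgClosure ℚ ℂ).isAlgClosed

lemma lift_poly {n : ℕ} (p : MvPolynomial (Fin n) ℂ) (hp : ∀ m, IsAlgebraic ℚ (coeff m p)) :
    ∃ q : MvPolynomial (Fin n) QB, map (algebraMap QB ℂ) q = p := by
  have : p ∈ Set.range (map (σ := Fin n) (algebraMap QB ℂ)) := by
    rw [MvPolynomial.mem_range_map_iff_coeffs_subset]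
    intro x hx
    obtain ⟨m, _, rfl⟩ := MvPolynomial.mem_coeffs_iff.1 hx
    exact ⟨⟨_, mem_algebraicClosure_iff.2 (hp m)⟩, rfl⟩
  exact this

lemma eval_lift {n : ℕ} (q : MvPolynomial (Fin n) QB) (z : Fin n → ℂ) :
    eval z (map (algebraMap QB ℂ) q) = aeval z q := by
  rw [eval_map, aeval_def]

lemma aeval_coe {n : ℕ} (q : MvPolynomial (Fin n) QB) (z : Fin n → QB) :
    aeval (fun i => (z i : ℂ)) q = ((aeval z q : QB) : ℂ) :=
  MvPolynomial.aeval_algebraMap_apply ℂ z q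

lemma spec_complex {n : ℕ} (P : Set (MvPolynomial (Fin n) ℂ))
    (hP : ∀ p ∈ P, ∀ m, IsAlgebraic ℚ (coeff m p)) (g : MvPolynomial (Fin n) ℂ)
    (hg : ∀ m, IsAlgebraic ℚ (coeff m g)) (z : Fin n → ℂ)
    (hz : ∀ p ∈ P, eval z p = 0) (hgz : eval z g ≠ 0) (j : Fin n) (hj : ¬ IsAlgebraic ℚ (z j)) 
    (Tor : Bool) (hTor : Tor = true → ∀ i, z i ≠ 0) :
    ∃ T : Set ℂ, T.Finite ∧ ∀ c ∉ T, IsAlgebraic ℚ c →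
    ∃ z' : Fin n → ℂ, (∀ p ∈ P, eval z' p = 0) ∧ eval z' g ≠ 0 ∧ 
      (Tor = true → ∀ i, z' i ≠ 0) ∧ z' j = c ∧
      ∀ i, IsAlgebraic ℚ (z i) → z' i = z i := by
  obtain ⟨g0, rfl⟩ := lift_poly g hg
  have := QB_closed
  have : Algebra.IsAlgebraic ℚ QB := ⟨fun x => by
    have := isAlgebraic_QB x
    exact (isAlgebraic_algebraMap_iff (R := ℚ) (A := ℂ) (algebraMap QB ℂ).injective).1 this⟩
  have htr : Transcendental QB (z j) := fun h => hj (h.restrictScalars ℚ)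
  rw [eval_lift] at hgz
  obtain ⟨h, hne, H⟩ := spec_aux z j htr (g0 * if Tor then ∏ i, X i else 1) (by
    rw [map_mul]
    refine mul_ne_zero hgz ?_
    split_ifs with hT
    · rw [map_prod]
      exact Finset.prod_ne_zero_iff.2 fun i _ => by simpa using hTor hT i
    · simp)
  refine ⟨(fun x : QB => (x : ℂ)) '' {x | h.eval x = 0}, ?_, ?_⟩
  · exact (Polynomial.finite_setOfPred_isRoot hne).image _
  intro c hc hca
  obtain ⟨z', hz'j, hz'g, hz'f⟩ := H ⟨c, mem_algebraicClosure_iff.2 hca⟩ (fun h0 => hc ⟨_, h0, rfl⟩)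
  rw [map_mul] at hz'g
  refine ⟨fun i => (z' i : ℂ), ?_, ?_, ?_, ?_, ?_⟩
  · intro p hp
    obtain ⟨q, rfl⟩ := lift_poly p (hP p hp)
    rw [eval_lift, aeval_coe, hz'f q (by rw [← eval_lift]; exact hz _ hp)]
    rfl
  · rw [eval_lift, aeval_coe]
    intro h0
    exact left_ne_zero_of_mul hz'g (Subtype.ext h0)
  · intro hT i hi
    have := right_ne_zero_of_mul hz'g
    rw [if_pos hT, map_prod] at this
    have := Finset.prod_ne_zero_iff.1 this i (Finset.mem_univ i)
    simp only [aeval_X] at this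
    exact this (Subtype.ext hi)
  · simp [hz'j]
  · intro i hi
    have := hz'f (X i - C ⟨z i, mem_algebraicClosure_iff.2 hi⟩) (by
      rw [map_sub, aeval_X, aeval_C]
      exact sub_self _)
    rw [map_sub, aeval_X, aeval_C, sub_eq_zero] at this
    change ((z' i : QB) : ℂ) = _
    rw [this]; rfl

/-- If `e^{2πiz}` is a root of unity then `z` is rational. -/
lemma rat_of_torsion (z : ℂ) (k : ℕ) (hk : 0 < k)
    (h : Complex.exp (2 * (Real.pi : ℂ) * Complex.I * z) ^ k = 1) : ∃ q : ℚ, z = q := by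
  rw [← Complex.exp_nat_mul, Complex.exp_eq_one_iff] at h
  obtain ⟨m, hm⟩ := h
  refine ⟨(m : ℚ) / k, ?_⟩
  have h2 := Complex.two_pi_I_ne_zero
  have hk' : (k : ℂ) ≠ 0 := by exact_mod_cast hk.ne'
  push_cast
  rw [eq_div_iff hk']
  apply mul_left_cancel₀ h2
  linear_combination hm


lemma factor_zeros (s : Finset ℂ) : ∀ (F : ℂ → ℂ), Differentiable ℂ F → (∀ z ∈ s, F z = 0) →
    ∃ G : ℂ → ℂ, Differentiable ℂ G ∧ ∀ z, F z = (∏ w ∈ s, (z - w)) * G z := by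
  induction s using Finset.induction_on with
  | empty => exact fun F hF _ => ⟨F, hF, fun z => by simp⟩
  | insert a s ha ih =>
    intro F hF hz
    have hd : Differentiable ℂ (dslope F a) := by
      have := (Complex.differentiableOn_dslope (f := F) (c := a) (s := Set.univ)
        Filter.univ_mem).2 hF.differentiableOn
      exact differentiableOn_univ.1 this
    have hFa : F a = 0 := hz a (Finset.mem_insert_self _ _)
    have hfac : ∀ z, F z = (z - a) * dslope F a z := by
      intro z
      have := sub_smul_dslope F a z
      rw [hFa, sub_zero, smul_eq_mul] at this
      exact this.symm
    obtain ⟨G, hG, h⟩ := ih (dslope F a) hd (by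
      intro z hzs
      have h1 := hfac z
      rw [hz z (Finset.mem_insert_of_mem hzs)] at h1
      have : z - a ≠ 0 := sub_ne_zero.2 (fun h => ha (h ▸ hzs))
      exact (mul_eq_zero.1 h1.symm).resolve_left this)
    refine ⟨G, hG, fun z => ?_⟩
    rw [Finset.prod_insert ha, hfac z, h z, mul_assoc]

lemma schwarz_zeros (s : Finset ℂ) (F : ℂ → ℂ) (hF : Differentiable ℂ F) (hz : ∀ z ∈ s, F z = 0)
    (r B : ℝ) (hr : 0 < r) (hs : ∀ z ∈ s, ‖z‖ ≤ r) (hB : ∀ z, ‖z‖ ≤ 5 * r → ‖F z‖ ≤ B)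
    (t : ℂ) (ht : ‖t‖ ≤ r) : ‖F t‖ ≤ B / 2 ^ s.card := by
  obtain ⟨G, hG, hFG⟩ := factor_zeros s F hF hz
  have hGt : ‖G t‖ ≤ B / (4 * r) ^ s.card := by
    refine Complex.norm_le_of_forall_mem_frontier_norm_le (U := Metric.ball (0 : ℂ) (5 * r))
      Metric.isBounded_ball hG.diffContOnCl ?_ ?_
    · intro z hz
      rw [frontier_ball _ (by positivity)] at hz
      have hz' : ‖z‖ = 5 * r := by simpa using hz
      rw [le_div_iff₀ (by positivity)]
      have h1 : (4 * r) ^ s.card ≤ ‖∏ w ∈ s, (z - w)‖ := by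
        rw [norm_prod, ← Finset.prod_const]
        refine Finset.prod_le_prod (fun w _ => by positivity) fun w hw => ?_
        have := norm_sub_norm_le z w
        have := hs w hw
        linarith
      calc ‖G z‖ * (4 * r) ^ s.card ≤ ‖G z‖ * ‖∏ w ∈ s, (z - w)‖ := by gcongr
        _ = ‖F z‖ := by rw [hFG z, norm_mul, mul_comm]
        _ ≤ B := hB z hz'.le
    · apply subset_closure
      simp only [Metric.mem_ball, dist_zero_right]
      linarith
  rw [hFG t, norm_mul]
  have h2 : ‖∏ w ∈ s, (t - w)‖ ≤ (2 * r) ^ s.card := by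
    rw [norm_prod, ← Finset.prod_const]
    refine Finset.prod_le_prod (fun w _ => by positivity) fun w hw => ?_
    have := norm_sub_le t w
    have := hs w hw
    linarith
  calc ‖∏ w ∈ s, (t - w)‖ * ‖G t‖ ≤ (2 * r) ^ s.card * (B / (4 * r) ^ s.card) := by gcongr
    _ = B / 2 ^ s.card := by
      rw [show (4 * r) = 2 * (2 * r) by ring, mul_pow 2 (2 * r)]
      field_simp

open NumberField in
lemma siegel_const (K : Type) [Field K] [NumberField K] : ∃ c : ℝ, ∀ (N : ℕ) (_ : 0 < N)
    (α β : Type) [Fintype α] [Fintype β] (a : Matrix α β (𝓞 K)) (_ : a ≠ 0)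
    (_ : Fintype.card α = N) (_ : Fintype.card β = 2 * N) (A : ℝ)
    (_ : ∀ k l, house (algebraMap (𝓞 K) K (a k l)) ≤ A),
    ∃ ξ : β → 𝓞 K, ξ ≠ 0 ∧ a.mulVec ξ = 0 ∧
      ∀ l, house (ξ l : K) ≤ c * (c * (2 * N) * A) := by
  classical
  have h0 : ∃ c : ℝ, ∀ (p q : ℕ) (_ : 0 < p) (_ : p < q)
    (α β : Type) [Fintype α] [Fintype β] (a : Matrix α β (𝓞 K)) (_ : a ≠ 0)
    (_ : Fintype.card α = p) (_ : Fintype.card β = q) (A : ℝ)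
    (_ : ∀ k l, house (algebraMap (𝓞 K) K (a k l)) ≤ A),
    ∃ ξ : β → 𝓞 K, ξ ≠ 0 ∧ a.mulVec ξ = 0 ∧
      ∀ l, house (ξ l : K) ≤ c * ((c * q * A) ^ ((p : ℝ) / (q - p))) :=
    ⟨_, fun p q hp hpq α β _ _ a ha hα hβ A hA =>
      house.exists_ne_zero_int_vec_house_le K a ha hp hpq hβ hA hα⟩
  obtain ⟨c, h0⟩ := h0
  refine ⟨c, fun N hN α β _ _ a ha hα hβ A hA => ?_⟩
  obtain ⟨ξ, h1, h2, h3⟩ := h0 N (2 * N) hN (by omega) α β a ha hα hβ A hA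
  refine ⟨ξ, h1, h2, fun l => ?_⟩
  have := h3 l
  rw [show ((N : ℕ) : ℝ) / (((2 * N : ℕ) : ℝ) - N) = 1 by
    push_cast
    have : (N : ℝ) ≠ 0 := by exact_mod_cast hN.ne'
    field_simp; norm_num, Real.rpow_one] at this
  push_cast at this
  exact this

/-- Fixed-base bookkeeping: the final growth comparison. -/
lemma growth (H D : ℝ) (hH : 1 ≤ H) : ∃ M0 : ℕ, ∀ M : ℕ, M0 ≤ M →
    D * Real.log (H * M) < Real.sqrt M * Real.log 2 := by
  have h1 : Filter.Tendsto (fun M : ℕ => (M : ℝ)) Filter.atTop Filter.atTop :=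
    tendsto_natCast_atTop_atTop
  have h2 : (fun x : ℝ => D * Real.log (H * x)) =o[Filter.atTop] (fun x : ℝ => Real.sqrt x) := by
    apply Asymptotics.IsLittleO.const_mul_left
    have h3 : (fun x : ℝ => Real.log H + Real.log x) =o[Filter.atTop]
        (fun x : ℝ => Real.sqrt x) := by
      apply Asymptotics.IsLittleO.add
      · rw [Asymptotics.isLittleO_const_left]
        right
        exact tendsto_norm_atTop_atTop.comp Real.tendsto_sqrt_atTop
      · have := isLittleO_log_rpow_atTop (r := 1 / 2) (by norm_num)
        simpa [Real.sqrt_eq_rpow] using this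
    refine h3.congr' ?_ Filter.EventuallyEq.rfl
    filter_upwards [Filter.eventually_gt_atTop 0] with x hx
    rw [Real.log_mul (by positivity) hx.ne']
  have h4 := (h2.comp_tendsto h1).def (c := Real.log 2 / 2) (by positivity)
  have h5 := h4.and (Filter.eventually_ge_atTop 1)
  obtain ⟨M0, hM0⟩ := Filter.eventually_atTop.1 h5
  refine ⟨M0, fun M hM => ?_⟩
  obtain ⟨h6, h7⟩ := hM0 M hM
  simp only [Function.comp] at h6
  have h8 : 0 < Real.sqrt M := Real.sqrt_pos.2 (by exact_mod_cast h7)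
  rw [Real.norm_of_nonneg h8.le] at h6
  have h9 := le_trans (Real.le_norm_self _) h6
  have : 0 < Real.log 2 := Real.log_pos (by norm_num)
  nlinarith [mul_pos h8 this]

lemma fin_poly_zero {L : ℕ} (c : Fin L → ℂ) (S : Set ℂ) (hS : S.Infinite)
    (h : ∀ x ∈ S, ∑ i, c i * x ^ (i : ℕ) = 0) : ∀ i, c i = 0 := by
  set p : Polynomial ℂ := ∑ i : Fin L, Polynomial.monomial (i : ℕ) (c i) with hp
  have h0 : p = 0 := by
    apply Polynomial.eq_zero_of_infinite_isRoot
    apply hS.mono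
    intro x hx
    change Polynomial.eval x p = 0
    rw [hp, Polynomial.eval_finsetSum]
    simpa using h x hx
  intro i
  have h1 : p.coeff (i : ℕ) = c i := by
    rw [hp, Polynomial.finsetSum_coeff]
    rw [Finset.sum_eq_single i]
    · simp
    · intro k _ hk
      rw [Polynomial.coeff_monomial, if_neg (fun h => hk (Fin.ext h))]
    · simp
  rw [← h1, h0]; simp

section core

open NumberField

variable {K : Type} [Field K] [NumberField K]

/-- The cleared-denominator monomial values. -/
def uu (D : ℕ) (b' g' : 𝓞 K) (N x y : ℕ) (l : Fin (2 * N ^ 3) × Fin N) : 𝓞 K :=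
  (D : 𝓞 K) ^ (2 * N ^ 3 - (l.1 : ℕ)) * ((D : 𝓞 K) * x + y * b') ^ (l.1 : ℕ) *
    (D : 𝓞 K) ^ ((N - (l.2 : ℕ)) * y) * g' ^ ((l.2 : ℕ) * y)

lemma house_natCast' (m : ℕ) : house (m : K) = m := by
  have := house_intCast (K := K) (m : ℤ)
  simpa using this

lemma house_uu (D : ℕ) (b' g' : 𝓞 K) (N M x y : ℕ) (l : Fin (2 * N ^ 3) × Fin N) (H : ℝ)
    (hM : 1 ≤ M) (hNM : N ^ 2 ≤ M) (hx : x ≤ M) (hy : y ≤ M)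
    (hH : 1 ≤ H) (hD : 2 * (D : ℝ) ≤ H) (hb : 2 * house (b' : K) ≤ H) (hg : house (g' : K) ≤ H) :
    house (uu D b' g' N x y l : K) ≤ (H * M) ^ (3 * N * M) := by
  have hM' : (1 : ℝ) ≤ M := by exact_mod_cast hM
  set X : ℝ := H * M with hX
  have hHX : H ≤ X := by rw [hX]; nlinarith
  have hX1 : 1 ≤ X := hH.trans hHX
  have hDX : house ((D : ℕ) : K) ≤ X := by
    rw [house_natCast']
    have : (0 : ℝ) ≤ D := by positivity
    linarith
  have hgX : house (g' : K) ≤ X := hg.trans hHX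
  have hsum : house ((D : K) * x + y * (b' : K)) ≤ X := by
    refine (house_add_le _ _).trans ?_
    rw [house_nat_mul, house_nat_mul, house_natCast']
    have hx' : (x : ℝ) ≤ M := by exact_mod_cast hx
    have hy' : (y : ℝ) ≤ M := by exact_mod_cast hy
    have h1 : (D : ℝ) * x ≤ (H / 2) * M := by
      apply mul_le_mul (by linarith) hx' (by positivity) (by linarith)
    have h2 : (y : ℝ) * house (b' : K) ≤ M * (H / 2) := by
      apply mul_le_mul hy' (by linarith) (house_nonneg _) (by positivity)
    rw [hX]; linarith
  have key : ∀ (α : K) (e : ℕ), house α ≤ X → house (α ^ e) ≤ X ^ e := fun α e h =>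
    (house_pow_le α e).trans (pow_le_pow_left₀ (house_nonneg _) h e)
  have hmul : ∀ (α β : K) (A B : ℝ), house α ≤ A → house β ≤ B → house (α * β) ≤ A * B :=
    fun α β A B h1 h2 => (house_mul_le α β).trans
      (mul_le_mul h1 h2 (house_nonneg _) ((house_nonneg _).trans h1))
  have hall : house (uu D b' g' N x y l : K) ≤ X ^ (2 * N ^ 3 - (l.1 : ℕ)) * X ^ (l.1 : ℕ) *
      X ^ ((N - (l.2 : ℕ)) * y) * X ^ ((l.2 : ℕ) * y) := by
    have : (uu D b' g' N x y l : K) = (D : K) ^ (2 * N ^ 3 - (l.1 : ℕ)) *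
      ((D : K) * x + y * b') ^ (l.1 : ℕ) *
      (D : K) ^ ((N - (l.2 : ℕ)) * y) * (g' : K) ^ ((l.2 : ℕ) * y) := by
      simp [uu]
    rw [this]
    exact hmul _ _ _ _ (hmul _ _ _ _ (hmul _ _ _ _ (key _ _ hDX) (key _ _ hsum)) (key _ _ hDX))
      (key _ _ hgX)
  refine hall.trans ?_
  rw [← pow_add, ← pow_add, ← pow_add]
  apply pow_le_pow_right₀ hX1
  have h1 := l.1.2
  have h2 := l.2.2
  have h3 : (N - (l.2 : ℕ)) * y + (l.2 : ℕ) * y = N * y := by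
    rw [← add_mul, Nat.sub_add_cancel h2.le]
  have h4 : N * y ≤ N * M := Nat.mul_le_mul_left _ hy
  have h5 : N ^ 3 ≤ N * M := by
    calc N ^ 3 = N * N ^ 2 := by ring
      _ ≤ _ := Nat.mul_le_mul_left _ hNM
  have h6 : 3 * N * M = 3 * (N * M) := by ring
  omega

lemma sigma_uu (σ : K →+* ℂ) (b g : K) (D : ℕ) (b' g' : 𝓞 K) (hb : (b' : K) = D * b)
    (hg : (g' : K) = D * g) (N x y : ℕ) (l : Fin (2 * N ^ 3) × Fin N) :
    σ (uu D b' g' N x y l : K) = (D : ℂ) ^ (2 * N ^ 3 + N * y) *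
      ((x + y * σ b) ^ (l.1 : ℕ) * (σ g ^ y) ^ (l.2 : ℕ)) := by
  have : (uu D b' g' N x y l : K) = (D : K) ^ (2 * N ^ 3 - (l.1 : ℕ)) *
      ((D : K) * x + y * b') ^ (l.1 : ℕ) *
      (D : K) ^ ((N - (l.2 : ℕ)) * y) * (g' : K) ^ ((l.2 : ℕ) * y) := by
    simp [uu]
  rw [this, hb, hg]
  simp only [map_mul, map_pow, map_add, map_natCast]
  have h1 := l.1.2
  have h2 := l.2.2
  have h3 : 2 * N ^ 3 + N * y = (2 * N ^ 3 - (l.1 : ℕ)) + l.1 +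
      ((N - (l.2 : ℕ)) * y + (l.2 : ℕ) * y) := by
    rw [← add_mul, Nat.sub_add_cancel h2.le, Nat.sub_add_cancel h1.le]
  rw [h3, pow_add, pow_add, pow_add]
  rw [show (D : ℂ) * x + y * (D * σ b) = D * (x + y * σ b) by ring, mul_pow, mul_pow,
    ← pow_mul, mul_comm y]
  ring

/-- the auxiliary function -/
def auxF (σ : K →+* ℂ) (N : ℕ) (a : Fin (2 * N ^ 3) × Fin N → 𝓞 K) (t : ℂ) : ℂ :=
  ∑ l, σ (a l : K) * (t ^ (l.1 : ℕ) * Complex.exp (2 * (Real.pi : ℂ) * Complex.I * t) ^ (l.2 : ℕ))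

lemma auxF_diff (σ : K →+* ℂ) (N : ℕ) (a : Fin (2 * N ^ 3) × Fin N → 𝓞 K) :
    Differentiable ℂ (auxF σ N a) := by
  unfold auxF
  fun_prop

lemma exp_at (β : ℂ) (x y : ℕ) : Complex.exp (2 * (Real.pi : ℂ) * Complex.I * (x + y * β)) =
    Complex.exp (2 * (Real.pi : ℂ) * Complex.I * β) ^ y := by
  rw [← Complex.exp_nat_mul, mul_add, Complex.exp_add]
  rw [show 2 * (Real.pi : ℂ) * Complex.I * x = x * (2 * Real.pi * Complex.I) by ring,
    Complex.exp_nat_mul_two_pi_mul_I, one_mul]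
  congr 1; ring

lemma sigma_val (σ : K →+* ℂ) (b g : K) (D : ℕ) (b' g' : 𝓞 K) (hb : (b' : K) = D * b)
    (hg : (g' : K) = D * g)
    (hexp : σ g = Complex.exp (2 * (Real.pi : ℂ) * Complex.I * σ b)) (N x y : ℕ)
    (a : Fin (2 * N ^ 3) × Fin N → 𝓞 K) :
    σ ((∑ l, uu D b' g' N x y l * a l : 𝓞 K) : K) = (D : ℂ) ^ (2 * N ^ 3 + N * y) *
      auxF σ N a (x + y * σ b) := by
  rw [auxF, exp_at, ← hexp, Finset.mul_sum]
  have hs : ((∑ l, uu D b' g' N x y l * a l : 𝓞 K) : K) =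
      ∑ l, (uu D b' g' N x y l : K) * (a l : K) := by
    change algebraMap (𝓞 K) K _ = _
    rw [map_sum]
    simp only [map_mul]
  rw [hs, map_sum]
  apply Finset.sum_congr rfl
  intro l _
  rw [map_mul, sigma_uu σ b g D b' g' hb hg]
  ring

lemma card_bound (N M : ℕ) (H : ℝ) (hN : 1 ≤ N) (hNM : N ^ 2 ≤ M) (hH : 2 ≤ H) :
    ((Finset.univ : Finset (Fin (2 * N ^ 3) × Fin N)).card : ℝ) ≤ (H * M) ^ (2 * N * M) := by
  have hM : 1 ≤ M := le_trans (Nat.one_le_pow _ _ hN) hNM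
  have hM' : (1 : ℝ) ≤ M := by exact_mod_cast hM
  have hX1 : 1 ≤ H * M := by nlinarith
  have h1 : (Finset.univ : Finset (Fin (2 * N ^ 3) × Fin N)).card = 2 * (N ^ 2) ^ 2 := by
    simp; ring
  rw [h1]
  have h2 : ((N : ℝ) ^ 2) ≤ M := by exact_mod_cast hNM
  calc ((2 * (N ^ 2) ^ 2 : ℕ) : ℝ) = 2 * ((N : ℝ) ^ 2) ^ 2 := by push_cast; ring
    _ ≤ 2 * (M : ℝ) ^ 2 := by gcongr
    _ ≤ (H * M) ^ 2 := by
      rw [mul_pow]; gcongr; nlinarith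
    _ ≤ (H * M) ^ (2 * N * M) := by
      apply pow_le_pow_right₀ hX1
      have : 1 ≤ N * M := Nat.mul_pos hN hM
      have h6 : 2 * N * M = 2 * (N * M) := by ring
      omega

lemma auxF_bound (σ : K →+* ℂ) (N M : ℕ) (a : Fin (2 * N ^ 3) × Fin N → 𝓞 K) (H : ℝ) (c : ℝ)
    (hN : 1 ≤ N) (hNM : N ^ 2 ≤ M) (hH : 2 ≤ H) (hc : 0 ≤ c) (hcH : 5 * c ≤ H)
    (hcE : Real.exp (10 * Real.pi * c) ≤ H)
    (ha : ∀ l, house (a l : K) ≤ (H * M) ^ (6 * N * M)) (t : ℂ) (ht : ‖t‖ ≤ 5 * (c * M)) :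
    ‖auxF σ N a t‖ ≤ (H * M) ^ (11 * N * M) := by
  have hM : 1 ≤ M := le_trans (Nat.one_le_pow _ _ hN) hNM
  have hM' : (1 : ℝ) ≤ M := by exact_mod_cast hM
  set X : ℝ := H * M with hX
  have hHX : H ≤ X := by rw [hX]; nlinarith
  have hX1 : 1 ≤ X := by linarith
  have htX : ‖t‖ ≤ X := by
    refine ht.trans ?_
    rw [hX, ← mul_assoc]
    gcongr
  have hN3 : 2 * N ^ 3 ≤ 2 * N * M := by
    calc 2 * N ^ 3 = 2 * N * N ^ 2 := by ring
      _ ≤ _ := Nat.mul_le_mul_left _ hNM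
  have hexp : ‖Complex.exp (2 * (Real.pi : ℂ) * Complex.I * t)‖ ≤ X ^ M := by
    calc ‖Complex.exp (2 * (Real.pi : ℂ) * Complex.I * t)‖
        ≤ Real.exp ‖2 * (Real.pi : ℂ) * Complex.I * t‖ := Complex.norm_exp_le_exp_norm _
      _ ≤ Real.exp (M * (10 * Real.pi * c)) := by
        apply Real.exp_le_exp.2
        rw [norm_mul, norm_mul, norm_mul, Complex.norm_I, Complex.norm_real,
          Real.norm_of_nonneg Real.pi_pos.le]
        simp only [Complex.norm_ofNat, mul_one]
        calc 2 * Real.pi * ‖t‖ ≤ 2 * Real.pi * (5 * (c * M)) := by gcongr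
          _ = _ := by ring
      _ = Real.exp (10 * Real.pi * c) ^ M := by rw [Real.exp_nat_mul]
      _ ≤ X ^ M := by gcongr; exact hcE.trans hHX
  have hterm : ∀ l ∈ (Finset.univ : Finset (Fin (2 * N ^ 3) × Fin N)), ‖σ (a l : K) * (t ^ (l.1 : ℕ) *
      Complex.exp (2 * (Real.pi : ℂ) * Complex.I * t) ^ (l.2 : ℕ))‖ ≤ X ^ (9 * N * M) := by
    intro l _
    rw [norm_mul, norm_mul, norm_pow, norm_pow]
    have h1 : ‖σ (a l : K)‖ ≤ X ^ (6 * N * M) := (norm_embedding_le_house _ σ).trans (ha l)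
    have h2 : ‖t‖ ^ (l.1 : ℕ) ≤ X ^ (2 * N * M) := by
      calc ‖t‖ ^ (l.1 : ℕ) ≤ X ^ (l.1 : ℕ) := by gcongr
        _ ≤ _ := pow_le_pow_right₀ hX1 (by have := l.1.2; omega)
    have h3 : ‖Complex.exp (2 * (Real.pi : ℂ) * Complex.I * t)‖ ^ (l.2 : ℕ) ≤ X ^ (N * M) := by
      calc _ ≤ (X ^ M) ^ (l.2 : ℕ) := by gcongr
        _ = X ^ (M * (l.2 : ℕ)) := by rw [pow_mul]
        _ ≤ _ := pow_le_pow_right₀ hX1 (by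
          rw [mul_comm N]; exact Nat.mul_le_mul_left _ l.2.2.le)
    calc _ ≤ X ^ (6 * N * M) * (X ^ (2 * N * M) * X ^ (N * M)) := by gcongr
      _ = X ^ (9 * N * M) := by
        rw [← pow_add, ← pow_add]; congr 1; ring
  unfold auxF
  calc _ ≤ _ := norm_sum_le_of_le _ hterm
    _ = ((Finset.univ : Finset (Fin (2 * N ^ 3) × Fin N)).card : ℝ) * X ^ (9 * N * M) := by
      rw [Finset.sum_const, nsmul_eq_mul]
    _ ≤ X ^ (2 * N * M) * X ^ (9 * N * M) := by
      gcongr; exact card_bound N M H hN hNM hH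
    _ = _ := by rw [← pow_add]; congr 1; ring

lemma house_val (D : ℕ) (b' g' : 𝓞 K) (N M x y : ℕ) (a : Fin (2 * N ^ 3) × Fin N → 𝓞 K) (H : ℝ)
    (hN : 1 ≤ N) (hNM : N ^ 2 ≤ M) (hx : x ≤ M) (hy : y ≤ M)
    (hH : 2 ≤ H) (hD : 2 * (D : ℝ) ≤ H) (hb : 2 * house (b' : K) ≤ H) (hg : house (g' : K) ≤ H)
    (ha : ∀ l, house (a l : K) ≤ (H * M) ^ (6 * N * M)) :
    house ((∑ l, uu D b' g' N x y l * a l : 𝓞 K) : K) ≤ (H * M) ^ (11 * N * M) := by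
  have hM : 1 ≤ M := le_trans (Nat.one_le_pow _ _ hN) hNM
  have hs : ((∑ l, uu D b' g' N x y l * a l : 𝓞 K) : K) =
      ∑ l, (uu D b' g' N x y l : K) * (a l : K) := by
    change algebraMap (𝓞 K) K _ = _
    rw [map_sum]
    simp only [map_mul]
  rw [hs]
  have hX0 : 0 ≤ H * M := by positivity
  calc _ ≤ ∑ l, house ((uu D b' g' N x y l : K) * (a l : K)) := house_sum_le_sum_house _ _
    _ ≤ ∑ l : Fin (2 * N ^ 3) × Fin N, (H * M) ^ (9 * N * M) := by
      apply Finset.sum_le_sum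
      intro l _
      refine (house_mul_le _ _).trans ?_
      calc _ ≤ (H * M) ^ (3 * N * M) * (H * M) ^ (6 * N * M) := by
            apply mul_le_mul _ (ha l) (house_nonneg _) (by positivity)
            exact house_uu D b' g' N M x y l H hM hNM hx hy (by linarith) hD hb hg
        _ = _ := by rw [← pow_add]; congr 1; ring
    _ = ((Finset.univ : Finset (Fin (2 * N ^ 3) × Fin N)).card : ℝ) * (H * M) ^ (9 * N * M) := by
      rw [Finset.sum_const, nsmul_eq_mul]
    _ ≤ (H * M) ^ (2 * N * M) * (H * M) ^ (9 * N * M) := by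
      gcongr; exact card_bound N M H hN hNM hH
    _ = _ := by rw [← pow_add]; congr 1; ring

lemma inj_lattice (β : ℂ) (hβ : ∀ q : ℚ, β ≠ q) :
    Function.Injective (fun p : ℕ × ℕ => (p.1 : ℂ) + p.2 * β) := by
  rintro ⟨x, y⟩ ⟨x', y'⟩ h
  simp only at h
  have hy : y = y' := by
    by_contra hne
    have hne' : (y : ℂ) - y' ≠ 0 := sub_ne_zero.2 (by exact_mod_cast hne)
    apply hβ (((x' : ℚ) - x) / (y - y'))
    push_cast
    rw [eq_div_iff hne']
    linear_combination h
  subst hy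
  have : (x : ℂ) = x' := by linear_combination h
  have : x = x' := by exact_mod_cast this
  rw [this]

lemma step (σ : K →+* ℂ) (b g : K) (D : ℕ) (hD0 : 0 < D) (b' g' : 𝓞 K) (hb : (b' : K) = D * b)
    (hg : (g' : K) = D * g)
    (hexp : σ g = Complex.exp (2 * (Real.pi : ℂ) * Complex.I * σ b))
    (hβ : ∀ q : ℚ, σ b ≠ q) (N M : ℕ) (a : Fin (2 * N ^ 3) × Fin N → 𝓞 K) (H : ℝ)
    (hN : 1 ≤ N) (hNM : N ^ 2 ≤ M) (hH : 2 ≤ H)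
    (hcH : 5 * (1 + ‖σ b‖) ≤ H) (hcE : Real.exp (10 * Real.pi * (1 + ‖σ b‖)) ≤ H)
    (hD : 2 * (D : ℝ) ≤ H) (hbH : 2 * house (b' : K) ≤ H) (hgH : house (g' : K) ≤ H)
    (ha : ∀ l, house (a l : K) ≤ (H * M) ^ (6 * N * M))
    (hgr : (14 * Module.finrank ℚ K : ℝ) * Real.log (H * M) < Real.sqrt M * Real.log 2)
    (hzero : ∀ x y, x < M → y < M → ∑ l, uu D b' g' N x y l * a l = 0) (x y : ℕ)
    (hx : x ≤ M) (hy : y ≤ M) : ∑ l, uu D b' g' N x y l * a l = 0 := by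
  by_contra hne
  have hM : 1 ≤ M := le_trans (Nat.one_le_pow _ _ hN) hNM
  have hM' : (1 : ℝ) ≤ M := by exact_mod_cast hM
  set c : ℝ := 1 + ‖σ b‖ with hc
  have hc1 : 1 ≤ c := by rw [hc]; linarith [norm_nonneg (σ b)]
  set X : ℝ := H * M with hX
  have hHX : H ≤ X := by rw [hX]; nlinarith
  have hX1 : 1 ≤ X := by linarith
  have hD1 : (1 : ℝ) ≤ D := by exact_mod_cast hD0
  have hDne : (D : ℂ) ≠ 0 := by exact_mod_cast hD0.ne'
  have hnorm : ∀ x y : ℕ, x ≤ M → y ≤ M → ‖(x : ℂ) + y * σ b‖ ≤ c * M := by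
    intro x y hx hy
    refine (norm_add_le _ _).trans ?_
    rw [norm_mul, Complex.norm_natCast, Complex.norm_natCast]
    have hx' : (x : ℝ) ≤ M := by exact_mod_cast hx
    have hy' : (y : ℝ) ≤ M := by exact_mod_cast hy
    have := mul_le_mul_of_nonneg_right hy' (norm_nonneg (σ b))
    rw [hc]; linarith
  let s : Finset ℂ := (Finset.range M ×ˢ Finset.range M).image
    (fun p : ℕ × ℕ => (p.1 : ℂ) + p.2 * σ b)
  have hcard : s.card = M ^ 2 := by
    rw [Finset.card_image_of_injective _ (inj_lattice _ hβ), Finset.card_product,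
      Finset.card_range, sq]
  have hsw : ‖auxF σ N a (x + y * σ b)‖ ≤ X ^ (11 * N * M) / 2 ^ s.card := by
    refine schwarz_zeros s (auxF σ N a) (auxF_diff σ N a) ?_ (c * M) _ (by positivity) ?_ ?_ _
      (hnorm x y hx hy)
    · intro z hz
      obtain ⟨p, hp, rfl⟩ := Finset.mem_image.1 hz
      obtain ⟨h1, h2⟩ := Finset.mem_product.1 hp
      have h3 := sigma_val σ b g D b' g' hb hg hexp N p.1 p.2 a
      rw [hzero p.1 p.2 (Finset.mem_range.1 h1) (Finset.mem_range.1 h2)] at h3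
      have h4 : (D : ℂ) ^ (2 * N ^ 3 + N * p.2) * auxF σ N a (p.1 + p.2 * σ b) = 0 := by
        rw [← h3]; simp
      exact (mul_eq_zero.1 h4).resolve_left (pow_ne_zero _ hDne)
    · intro z hz
      obtain ⟨p, hp, rfl⟩ := Finset.mem_image.1 hz
      obtain ⟨h1, h2⟩ := Finset.mem_product.1 hp
      exact hnorm _ _ (Finset.mem_range.1 h1).le (Finset.mem_range.1 h2).le
    · intro z hz
      exact auxF_bound σ N M a H c hN hNM hH (by linarith) hcH hcE ha z hz
  rw [hcard] at hsw
  set v : 𝓞 K := ∑ l, uu D b' g' N x y l * a l with hv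
  have hhouse : house (v : K) ≤ X ^ (11 * N * M) :=
    house_val D b' g' N M x y a H hN hNM hx hy hH hD hbH hgH ha
  have hsv : ‖σ (v : K)‖ ≤ X ^ (3 * N * M) * (X ^ (11 * N * M) / 2 ^ (M ^ 2)) := by
    rw [hv, sigma_val σ b g D b' g' hb hg hexp, norm_mul, norm_pow, Complex.norm_natCast]
    have hDX : (D : ℝ) ^ (2 * N ^ 3 + N * y) ≤ X ^ (3 * N * M) := by
      calc (D : ℝ) ^ (2 * N ^ 3 + N * y) ≤ X ^ (2 * N ^ 3 + N * y) := by
            gcongr; linarith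
        _ ≤ _ := by
          apply pow_le_pow_right₀ hX1
          have h4 : N * y ≤ N * M := Nat.mul_le_mul_left _ hy
          have h5 : N ^ 3 ≤ N * M := by
            calc N ^ 3 = N * N ^ 2 := by ring
              _ ≤ _ := Nat.mul_le_mul_left _ hNM
          have h6 : 3 * N * M = 3 * (N * M) := by ring
          omega
    gcongr
  have hnormge : 1 ≤ ‖Algebra.norm ℚ (v : K)‖ := by
    have h1 : Algebra.norm ℤ v ≠ 0 := by
      rw [Algebra.norm_ne_zero_iff]; exact hne
    have h2 : ((Algebra.norm ℤ v : ℤ) : ℚ) = Algebra.norm ℚ (v : K) :=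
      Algebra.coe_norm_int v
    rw [← h2, ← Rat.norm_cast_real, Rat.cast_intCast, Real.norm_eq_abs, ← Int.cast_abs]
    exact_mod_cast Int.one_le_abs h1
  have hd : 1 ≤ Module.finrank ℚ K := Module.finrank_pos
  set d := Module.finrank ℚ K with hdd
  have hfin : (2 : ℝ) ^ (M ^ 2) ≤ X ^ (14 * d * N * M) := by
    have h1 := hnormge.trans (norm_norm_le_norm_mul_house_pow (v : K) σ)
    have h2 : ‖σ (v : K)‖ * house (v : K) ^ (d - 1) ≤
        (X ^ (3 * N * M) * (X ^ (11 * N * M) / 2 ^ (M ^ 2))) * (X ^ (11 * N * M)) ^ (d - 1) := by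
      have := house_nonneg (v : K)
      gcongr
    have h3 := h1.trans h2
    have h4 : (X ^ (3 * N * M) * (X ^ (11 * N * M) / 2 ^ (M ^ 2))) * (X ^ (11 * N * M)) ^ (d - 1)
        = X ^ (3 * N * M + 11 * N * M + 11 * N * M * (d - 1)) / 2 ^ (M ^ 2) := by
      rw [pow_add, pow_add, pow_mul]; ring
    rw [h4, le_div_iff₀ (by positivity), one_mul] at h3
    refine h3.trans (pow_le_pow_right₀ hX1 ?_)
    obtain ⟨e, he⟩ : ∃ e, d = e + 1 := ⟨d - 1, by omega⟩
    rw [he, Nat.add_sub_cancel]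
    nlinarith [Nat.zero_le (e * N * M)]
  have hlog := Real.log_le_log (by positivity) hfin
  rw [Real.log_pow, Real.log_pow] at hlog
  push_cast at hlog
  have hNs : (N : ℝ) ≤ Real.sqrt M := by
    apply Real.le_sqrt_of_sq_le
    exact_mod_cast hNM
  have hss : Real.sqrt M * Real.sqrt M = M := Real.mul_self_sqrt (by positivity)
  have hs0 : 0 < Real.sqrt M := Real.sqrt_pos.2 (by linarith)
  have hlX : 0 ≤ Real.log X := Real.log_nonneg hX1
  have h1 : (14 * d * N * M : ℝ) * Real.log X ≤ (Real.sqrt M * M) * ((14 * d) * Real.log X) := by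
    have : (N : ℝ) * (M * ((14 * d) * Real.log X)) ≤
        Real.sqrt M * (M * ((14 * d) * Real.log X)) := by gcongr
    linarith
  have h2 : (Real.sqrt M * M) * ((14 * d) * Real.log X) <
      (Real.sqrt M * M) * (Real.sqrt M * Real.log 2) := by
    gcongr
  have h3 : (Real.sqrt M * M) * (Real.sqrt M * Real.log 2) = (M : ℝ) ^ 2 * Real.log 2 := by
    linear_combination (M * Real.log 2) * hss
  linarith

lemma all_zero (σ : K →+* ℂ) (b g : K) (D : ℕ) (hD0 : 0 < D) (b' g' : 𝓞 K)
    (hb : (b' : K) = D * b) (hg : (g' : K) = D * g)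
    (hexp : σ g = Complex.exp (2 * (Real.pi : ℂ) * Complex.I * σ b))
    (htors : ∀ k : ℕ, 0 < k → σ g ^ k ≠ 1) (N : ℕ) (a : Fin (2 * N ^ 3) × Fin N → 𝓞 K)
    (hzero : ∀ x y, ∑ l, uu D b' g' N x y l * a l = 0) : a = 0 := by
  have hDne : (D : ℂ) ≠ 0 := by exact_mod_cast hD0.ne'
  have h1 : ∀ x y : ℕ, ∑ i : Fin (2 * N ^ 3), (∑ j : Fin N, σ (a (i, j) : K) *
      (σ g ^ y) ^ (j : ℕ)) * ((x : ℂ) + y * σ b) ^ (i : ℕ) = 0 := by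
    intro x y
    have h3 := sigma_val σ b g D b' g' hb hg hexp N x y a
    rw [hzero x y] at h3
    have h4 : (D : ℂ) ^ (2 * N ^ 3 + N * y) * auxF σ N a (x + y * σ b) = 0 := by
      rw [← h3]; simp
    have h5 := (mul_eq_zero.1 h4).resolve_left (pow_ne_zero _ hDne)
    rw [auxF, exp_at, ← hexp, Fintype.sum_prod_type] at h5
    rw [← h5]
    apply Finset.sum_congr rfl
    intro i _
    rw [Finset.sum_mul]
    apply Finset.sum_congr rfl
    intro j _
    ring
  have h2 : ∀ (y : ℕ) (i : Fin (2 * N ^ 3)), ∑ j : Fin N, σ (a (i, j) : K) *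
      (σ g ^ y) ^ (j : ℕ) = 0 := by
    intro y
    apply fin_poly_zero _ (Set.range (fun x : ℕ => (x : ℂ) + y * σ b))
    · apply Set.infinite_range_of_injective
      intro x x' h
      have : (x : ℂ) = x' := add_right_cancel h
      exact_mod_cast this
    · rintro _ ⟨x, rfl⟩
      exact h1 x y
  have hg0 : σ g ≠ 0 := by rw [hexp]; exact Complex.exp_ne_zero _
  have h3 : ∀ (i : Fin (2 * N ^ 3)) (j : Fin N), σ (a (i, j) : K) = 0 := by
    intro i
    apply fin_poly_zero _ (Set.range (fun y : ℕ => σ g ^ y))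
    · apply Set.infinite_range_of_injective
      have key : ∀ y y' : ℕ, y < y' → σ g ^ y ≠ σ g ^ y' := by
        intro y y' hlt h
        apply htors (y' - y) (by omega)
        apply mul_left_cancel₀ (pow_ne_zero y hg0)
        rw [← pow_add, mul_one, h]
        congr 1; omega
      intro y y' h
      rcases lt_trichotomy y y' with hlt | heq | hlt
      · exact absurd h (key _ _ hlt)
      · exact heq
      · exact absurd h.symm (key _ _ hlt)
    · rintro _ ⟨y, rfl⟩
      exact h2 y i
  funext l
  have := h3 l.1 l.2
  rw [map_eq_zero] at this
  exact RingOfIntegers.ext this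

lemma gs_core (σ : K →+* ℂ) (b g : K)
    (hexp : σ g = Complex.exp (2 * (Real.pi : ℂ) * Complex.I * σ b))
    (htors : ∀ k : ℕ, 0 < k → σ g ^ k ≠ 1)
    (hβ : ∀ q : ℚ, σ b ≠ q) : False := by
  obtain ⟨D, hD0, b', g', hb, hg⟩ : ∃ D : ℕ, 0 < D ∧ ∃ b' g' : 𝓞 K,
      (b' : K) = D * b ∧ (g' : K) = D * g := by
    have key : ∀ x : K, ∃ d : ℕ, 0 < d ∧ IsIntegral ℤ ((d : K) * x) := by
      intro x
      have hx : IsAlgebraic ℤ x :=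
        (IsFractionRing.isAlgebraic_iff ℤ ℚ K).2 (Algebra.IsAlgebraic.isAlgebraic x)
      obtain ⟨m, hm, hi⟩ := hx.exists_integral_multiple
      refine ⟨m.natAbs, Int.natAbs_pos.2 hm, ?_⟩
      rw [zsmul_eq_mul] at hi
      rcases Int.natAbs_eq m with h | h
      · rw [h] at hi; simpa using hi
      · rw [h] at hi
        have := hi.neg
        simpa using this
    obtain ⟨d1, hd1, h1⟩ := key b
    obtain ⟨d2, hd2, h2⟩ := key g
    refine ⟨d1 * d2, Nat.mul_pos hd1 hd2, ⟨((d1 * d2 : ℕ) : K) * b, ?_⟩,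
      ⟨((d1 * d2 : ℕ) : K) * g, ?_⟩, rfl, rfl⟩
    · have := (isIntegral_algebraMap (R := ℤ) (A := K) (x := (d2 : ℤ))).mul h1
      change IsIntegral ℤ _
      convert! this using 1
      push_cast; ring
    · have := (isIntegral_algebraMap (R := ℤ) (A := K) (x := (d1 : ℤ))).mul h2
      change IsIntegral ℤ _
      convert! this using 1
      push_cast; ring
  obtain ⟨C, hC⟩ := siegel_const K
  set c : ℝ := 1 + ‖σ b‖ with hc
  obtain ⟨H, hH⟩ : ∃ H : ℝ, ∀ x ∈ ([2, 5 * c, Real.exp (10 * Real.pi * c), 2 * (D : ℝ),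
      2 * house (b' : K), house (g' : K), |C|] : List ℝ), x ≤ H := by
    obtain ⟨H, hH⟩ := (List.finite_toSet ([2, 5 * c, Real.exp (10 * Real.pi * c), 2 * (D : ℝ),
      2 * house (b' : K), house (g' : K), |C|] : List ℝ)).bddAbove
    exact ⟨H, fun x hx => hH hx⟩
  simp only [List.mem_cons, List.not_mem_nil, or_false, forall_eq_or_imp, forall_eq] at hH
  obtain ⟨hH2, hH5, hHE, hHD, hHb, hHg, hHC⟩ := hH
  obtain ⟨M0, hM0⟩ := growth H (14 * Module.finrank ℚ K : ℝ) (by linarith)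
  set N : ℕ := M0 + 1 with hNdef
  have hN : 1 ≤ N := by omega
  have hNM0 : M0 ≤ N ^ 2 := by nlinarith
  have hN2 : 1 ≤ N ^ 2 := Nat.one_le_pow _ _ hN
  -- Siegel
  obtain ⟨a, ha0, haz, hab⟩ := hC (N ^ 2 * N ^ 2) (by positivity) (Fin (N ^ 2) × Fin (N ^ 2))
    (Fin (2 * N ^ 3) × Fin N) (fun k l => uu D b' g' N k.1 k.2 l) (by
      intro h
      have h1 := congrFun (congrFun h (⟨0, by omega⟩, ⟨0, by omega⟩))
        (⟨0, by positivity⟩, ⟨0, by omega⟩)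
      simp [uu] at h1
      omega) (by simp) (by simp; ring) ((H * (N ^ 2 : ℕ)) ^ (3 * N * N ^ 2))
    (fun k l => house_uu D b' g' N (N ^ 2) k.1 k.2 l H hN2 le_rfl k.1.2.le k.2.2.le
      (by linarith) hHD hHb hHg)
  have hbound : ∀ M, N ^ 2 ≤ M → ∀ l, house (a l : K) ≤ (H * M) ^ (6 * N * M) := by
    intro M hM l
    have hM1 : 1 ≤ M := hN2.trans hM
    have hM' : (1 : ℝ) ≤ M := by exact_mod_cast hM1
    have hX1 : 1 ≤ H * M := by nlinarith
    have hNM : ((N ^ 2 : ℕ) : ℝ) ≤ M := by exact_mod_cast hM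
    have hA : (H * (N ^ 2 : ℕ)) ^ (3 * N * N ^ 2) ≤ (H * M) ^ (3 * N * M) := by
      calc (H * (N ^ 2 : ℕ)) ^ (3 * N * N ^ 2) ≤ (H * M) ^ (3 * N * N ^ 2) := by gcongr
        _ ≤ _ := pow_le_pow_right₀ hX1 (Nat.mul_le_mul_left _ hM)
    have hCC : C * (C * (2 * ((N ^ 2 * N ^ 2 : ℕ) : ℝ))) ≤ (H * M) ^ 3 := by
      have h1 : C ^ 2 ≤ H ^ 2 := by
        rw [← sq_abs C]; gcongr
      have h2 : ((N ^ 2 * N ^ 2 : ℕ) : ℝ) ≤ (M : ℝ) ^ 2 := by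
        push_cast at hNM ⊢
        nlinarith [sq_nonneg (N : ℝ)]
      calc C * (C * (2 * ((N ^ 2 * N ^ 2 : ℕ) : ℝ))) = C ^ 2 * (2 * ((N ^ 2 * N ^ 2 : ℕ) : ℝ)) := by
            ring
        _ ≤ H ^ 2 * (H * (M : ℝ) ^ 2) := by gcongr
        _ = H ^ 3 * ((M : ℝ) ^ 2 * 1) := by ring
        _ ≤ H ^ 3 * ((M : ℝ) ^ 2 * M) := by gcongr
        _ = _ := by ring
    calc house (a l : K) ≤ _ := hab l
      _ = C * (C * (2 * ((N ^ 2 * N ^ 2 : ℕ) : ℝ))) * (H * (N ^ 2 : ℕ)) ^ (3 * N * N ^ 2) := by ring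
      _ ≤ (H * M) ^ 3 * (H * M) ^ (3 * N * M) := by gcongr
      _ = (H * M) ^ (3 + 3 * N * M) := by rw [pow_add]
      _ ≤ _ := by
        apply pow_le_pow_right₀ hX1
        have : 1 ≤ N * M := Nat.mul_pos hN hM1
        have h6 : 3 * N * M = 3 * (N * M) := by ring
        have h7 : 6 * N * M = 6 * (N * M) := by ring
        omega
  have hind : ∀ e : ℕ, ∀ x y, x < N ^ 2 + e → y < N ^ 2 + e →
      ∑ l, uu D b' g' N x y l * a l = 0 := by
    intro e
    induction e with
    | zero =>
      intro x y hx hy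
      exact congrFun haz (⟨x, hx⟩, ⟨y, hy⟩)
    | succ e ih =>
      intro x y hx hy
      exact step σ b g D hD0 b' g' hb hg hexp hβ N (N ^ 2 + e) a H hN (by omega) hH2 hH5 hHE hHD
        hHb hHg (hbound _ (by omega)) (hM0 _ (by omega)) ih x y (by omega) (by omega)
  exact ha0 (all_zero σ b g D hD0 b' g' hb hg hexp htors N a fun x y =>
    hind (x + y + 1) x y (by omega) (by omega))

end core

theorem gelfond_schneider_special (z : ℂ) (hz : IsAlgebraic ℚ z)
    (h : IsAlgebraic ℚ (Complex.exp (2 * (Real.pi : ℂ) * Complex.I * z))) : ∃ q : ℚ, z = q := by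
  by_contra hne
  push Not at hne
  set w := Complex.exp (2 * (Real.pi : ℂ) * Complex.I * z) with hw
  let K := IntermediateField.adjoin ℚ ({z, w} : Set ℂ)
  have hfd : FiniteDimensional ℚ K := by
    apply IntermediateField.finiteDimensional_adjoin
    intro x hx
    rcases hx with rfl | rfl
    · exact hz.isIntegral
    · exact h.isIntegral
  have : NumberField K := { to_charZero := inferInstance, to_finiteDimensional := hfd }
  refine gs_core (K := K) (algebraMap K ℂ)
    ⟨z, IntermediateField.subset_adjoin _ _ (by simp)⟩
    ⟨w, IntermediateField.subset_adjoin _ _ (by simp)⟩ hw ?_ hne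
  intro k hk h1
  obtain ⟨q, hq⟩ := rat_of_torsion z k hk h1
  exact hne q hq

lemma ConstructibleQbar.specProp {n : ℕ} {Z : Set (Fin n → ℂ)} (hZ : ConstructibleQbar n Z) :
    SpecProp Z := by
  obtain ⟨k, F, G, hFG, rfl⟩ := hZ
  intro z hz j hj
  obtain ⟨i, hzF, hzG⟩ := Set.mem_iUnion.1 hz
  obtain ⟨⟨P, hP, hFi⟩, ⟨Q, hQ, hGi⟩⟩ := hFG i
  rw [hFi] at hzF
  rw [hGi] at hzG
  simp only [Set.mem_ofPred_eq, not_forall] at hzF hzG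
  obtain ⟨g, hgQ, hg⟩ := hzG
  obtain ⟨T, hT, H⟩ := spec_complex P hP g (hQ g hgQ) z hzF hg j hj false (by simp)
  refine ⟨T, hT, fun c hc hca => ?_⟩
  obtain ⟨z', h1, h2, -, h4, h5⟩ := H c hc hca
  refine ⟨z', Set.mem_iUnion.2 ⟨i, ?_, ?_⟩, h4, h5⟩
  · rw [hFi]; exact h1
  · rw [hGi]; exact fun h => h2 (h g hgQ)

lemma ConstructibleTorusQbar.specProp {n : ℕ} {Z : Set (Fin n → ℂ)}
    (hZ : ConstructibleTorusQbar n Z) : SpecProp Z := by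
  obtain ⟨k, F, G, hFG, rfl⟩ := hZ
  intro z hz j hj
  obtain ⟨i, hzF, hzG⟩ := Set.mem_iUnion.1 hz
  obtain ⟨⟨P, hP, hFi⟩, ⟨Q, hQ, hGi⟩⟩ := hFG i
  rw [hFi] at hzF
  obtain ⟨hz0, hzF⟩ := hzF
  rw [hGi] at hzG
  simp only [Set.mem_ofPred_eq, not_and, not_forall] at hzG
  obtain ⟨g, hgQ, hg⟩ := hzG hz0
  obtain ⟨T, hT, H⟩ := spec_complex P hP g (hQ g hgQ) z hzF hg j hj true (fun _ => hz0)
  refine ⟨T, hT, fun c hc hca => ?_⟩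
  obtain ⟨z', h1, h2, h3, h4, h5⟩ := H c hc hca
  refine ⟨z', Set.mem_iUnion.2 ⟨i, ?_, ?_⟩, h4, h5⟩
  · rw [hFi]; exact ⟨h3 rfl, h1⟩
  · rw [hGi]; exact fun h => h2 (h.2 g hgQ)

lemma torsion_of_rat (q : ℚ) :
    Complex.exp (2 * (Real.pi : ℂ) * Complex.I * (q : ℂ)) ^ q.den = 1 := by
  rw [← Complex.exp_nat_mul, Complex.exp_eq_one_iff]
  refine ⟨q.num, ?_⟩
  have : (q.den : ℂ) * (q : ℂ) = q.num := by
    exact_mod_cast Rat.den_mul_eq_num q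
  linear_combination (2 * (Real.pi : ℂ) * Complex.I) * this

lemma algebraic_of_pow_eq_one (w : ℂ) (k : ℕ) (hk : 0 < k) (h : w ^ k = 1) : IsAlgebraic ℚ w := by
  apply IsAlgebraic.of_pow hk
  rw [h]
  exact isAlgebraic_one

lemma exists_rat_prefix {n : ℕ} (Z : Set (Fin n → ℂ)) (hZne : Z.Nonempty) (hZ : SpecProp Z)
    (hexpZ : SpecProp (expMap n '' Z)) (k : ℕ) :
    ∃ z ∈ Z, ∀ i : Fin n, i.1 < k → ∃ q : ℚ, z i = q := by
  induction k with
  | zero => 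
    obtain ⟨z, hz⟩ := hZne
    exact ⟨z, hz, fun i hi => absurd hi (by omega)⟩
  | succ k ih =>
    obtain ⟨z, hz, hzk⟩ := ih
    by_cases hkn : k < n
    swap
    · exact ⟨z, hz, fun i _ => hzk i (by omega)⟩
    let j : Fin n := ⟨k, hkn⟩
    -- enough to find a point whose `j`-th coordinate is rational too
    suffices h : ∃ z ∈ Z, (∀ i : Fin n, i.1 < k → ∃ q : ℚ, z i = q) ∧ ∃ q : ℚ, z j = q by
      obtain ⟨z', hz', h1, h2⟩ := h
      refine ⟨z', hz', fun i hi => ?_⟩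
      rcases Nat.lt_succ_iff_lt_or_eq.1 hi with h | h
      · exact h1 i h
      · have : i = j := Fin.ext h
        rw [this]; exact h2
    by_cases hA : ∃ z ∈ Z, (∀ i : Fin n, i.1 < k → ∃ q : ℚ, z i = q) ∧ ¬ IsAlgebraic ℚ (z j)
    · obtain ⟨y, hy, hyk, hyj⟩ := hA
      obtain ⟨T, hT, H⟩ := hZ y hy j hyj
      have hinf : (Set.range (fun q : ℚ => (q : ℂ))).Infinite :=
        Set.infinite_range_of_injective Rat.cast_injective
      obtain ⟨_, ⟨q, rfl⟩, hq⟩ := hinf.exists_notMem_finite hT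
      obtain ⟨y', hy', hy'j, hy'i⟩ := H q hq (isAlgebraic_algebraMap (R := ℚ) (A := ℂ) q)
      refine ⟨y', hy', fun i hi => ?_, ⟨q, hy'j⟩⟩
      obtain ⟨r, hr⟩ := hyk i hi
      refine ⟨r, ?_⟩
      rw [hy'i i (by rw [hr]; exact isAlgebraic_algebraMap (R := ℚ) (A := ℂ) r), hr]
    · push Not at hA
      refine ⟨z, hz, hzk, ?_⟩
      by_cases hw : IsAlgebraic ℚ (expMap n z j)
      · exact gelfond_schneider_special _ (hA z hz hzk) hw
      exfalso
      obtain ⟨T, hT, H⟩ := hexpZ _ ⟨z, hz, rfl⟩ j hw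
      have hinf : (Set.range (fun m : ℕ => ((m + 2 : ℕ) : ℂ))).Infinite :=
        Set.infinite_range_of_injective (fun a b h => by
          have : a + 2 = b + 2 := by exact_mod_cast h
          omega)
      obtain ⟨_, ⟨m, rfl⟩, hm⟩ := hinf.exists_notMem_finite hT
      obtain ⟨_, ⟨y, hy, rfl⟩, hyj, hyi⟩ := H _ hm (isAlgebraic_natCast _)
      have hyk : ∀ i : Fin n, i.1 < k → ∃ q : ℚ, y i = q := by
        intro i hi
        obtain ⟨q, hq⟩ := hzk i hi
        have h1 : expMap n z i ^ q.den = 1 := by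
          unfold expMap; rw [hq]; exact torsion_of_rat q
        have h2 := hyi i (algebraic_of_pow_eq_one _ _ q.den_pos h1)
        rw [← h2] at h1
        exact rat_of_torsion _ _ q.den_pos h1
      obtain ⟨q, hq⟩ := gelfond_schneider_special (y j) (hA y hy hyk) (by
        change IsAlgebraic ℚ (expMap n y j)
        rw [hyj]; exact isAlgebraic_natCast _)
      have h1 : expMap n y j ^ q.den = 1 := by
        unfold expMap; rw [hq]; exact torsion_of_rat q
      rw [hyj] at h1
      have h1' : ((m + 2 : ℕ) : ℂ) ^ q.den = 1 := h1
      have h2 : (m + 2) ^ q.den = 1 := by exact_mod_cast h1'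
      have h3 := Nat.one_lt_pow q.den_pos.ne' (show 1 < m + 2 by omega)
      omega

/-- If `Z ⊆ ℂ^n` is a nonempty Zariski constructible set defined over `ℚ̄`, and
`exp(Z) ⊆ (ℂ^*)^n` is also Zariski constructible defined over `ℚ̄`, then `exp(Z)`
contains a torsion point. -/
theorem torsion_point_in_exp_image (n : ℕ) (hn : 1 ≤ n)
    (Z : Set (Fin n → ℂ)) (hZne : Z.Nonempty)
    (hZ : ConstructibleQbar n Z)
    (hexpZ : ConstructibleTorusQbar n (expMap n '' Z)) :
    ∃ τ ∈ expMap n '' Z, IsTorsionPoint n τ := by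
  obtain ⟨z, hz, hzr⟩ := exists_rat_prefix Z hZne hZ.specProp hexpZ.specProp n
  refine ⟨_, ⟨z, hz, rfl⟩, fun i => ?_⟩
  obtain ⟨q, hq⟩ := hzr i i.2
  refine ⟨q.den, q.den_pos, ?_⟩
  unfold expMap
  rw [hq]
  exact torsion_of_rat q
end
end

section
/- Let n ≥ 1. Suppose S ⊆ ℂ^n is a nonempty irreducible Zariski closed subset defined over ℚ̄, and T ⊆ (ℂ^*)^n is an irreducible Zariski closed subset defined over ℚ̄ such that dim S = dim T and exp(S) ⊆ T. Then T is a torsion translate of a subtorus of (ℂ^*)^n. -/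
open MvPolynomial

noncomputable section

/-- A subset of `ℂ^n` is Zariski closed if it is the common zero locus of a family
of polynomials with complex coefficients. -/
def ZClosed (n : ℕ) (S : Set (Fin n → ℂ)) : Prop :=
  ∃ P : Set (MvPolynomial (Fin n) ℂ), S = {z | ∀ p ∈ P, eval z p = 0}

/-- A subset of `(ℂ^*)^n` (viewed as the set of points of `ℂ^n` with all coordinates
nonzero) is Zariski closed if it is the common zero locus in `(ℂ^*)^n` of a family of
polynomials. -/
def ZClosedTorus (n : ℕ) (T : Set (Fin n → ℂ)) : Prop :=
  ∃ P : Set (MvPolynomial (Fin n) ℂ),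
    T = {z | (∀ i, z i ≠ 0) ∧ ∀ p ∈ P, eval z p = 0}

/-- A set is irreducible (with respect to a given notion of closed set) if it is
nonempty and not the union of two proper closed subsets of it. -/
def IsIrrOf {α : Type*} (Closed : Set α → Prop) (S : Set α) : Prop :=
  S.Nonempty ∧ ∀ F G : Set α, Closed F → Closed G → S ⊆ F ∪ G → S ⊆ F ∨ S ⊆ G

/-- The dimension (with respect to a given notion of closed set) of a set `S`:
the supremum of lengths `d` of chains `Z_0 ⊊ Z_1 ⊊ ⋯ ⊊ Z_d` of nonempty
irreducible closed subsets contained in `S`. -/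
def dimOf {α : Type*} (Closed : Set α → Prop) (S : Set α) : ℕ∞ :=
  sSup {e : ℕ∞ | ∃ d : ℕ, e = (d : ℕ∞) ∧
    ∃ Z : Fin (d + 1) → Set α,
      (∀ i, Closed (Z i) ∧ IsIrrOf Closed (Z i) ∧ Z i ⊆ S) ∧
      ∀ i j : Fin (d + 1), i < j → Z i ⊂ Z j}

/-- A subtorus of `(ℂ^*)^n`: the image of a homomorphism `(ℂ^*)^m → (ℂ^*)^n`
given by an integer matrix, `x ↦ (∏_j x_j ^ a_{λ j})_λ`. -/
def IsSubtorus (n : ℕ) (T₀ : Set (Fin n → ℂ)) : Prop :=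
  ∃ (m : ℕ) (a : Fin n → Fin m → ℤ),
    T₀ = {z | ∃ x : Fin m → ℂ, (∀ j, x j ≠ 0) ∧ ∀ l, z l = ∏ j, x j ^ a l j}

/-- A torsion translate of a subtorus: a coset `τ · T₀` with `τ` a torsion point
and `T₀` a subtorus. -/
def IsTorsionTranslateOfSubtorus (n : ℕ) (T : Set (Fin n → ℂ)) : Prop :=
  ∃ (τ : Fin n → ℂ) (T₀ : Set (Fin n → ℂ)),
    IsTorsionPoint n τ ∧ IsSubtorus n T₀ ∧
    T = (fun z => fun i => τ i * z i) '' T₀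


lemma derExt {k K ι : Type} [Field k] [CharZero k] [Field K] [Algebra k K] (x : ι → K)
    (hx : IsTranscendenceBasis k x) (v : ι → K) :
    ∃ δ : Derivation k K K, ∀ i, δ (x i) = v i := by
  let P := MvPolynomial ι k
  let : Algebra P K := (aeval x : P →ₐ[k] K).toRingHom.toAlgebra
  have hmap : ∀ p : P, algebraMap P K p = aeval x p := fun p => rfl
  have : IsScalarTower k P K := IsScalarTower.of_algebraMap_eq fun c => by
    rw [hmap, MvPolynomial.algebraMap_eq, aeval_C]
  have hinj : Function.Injective (algebraMap P K) := hx.1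
  have : FaithfulSMul P K := (faithfulSMul_iff_algebraMap_injective P K).2 hinj
  have : Algebra.IsAlgebraic P K := by
    constructor
    intro y
    have := hx.isAlgebraic.isAlgebraic y
    obtain ⟨q, hq, hq0⟩ := this
    let e : P ≃ₐ[k] Algebra.adjoin k (Set.range x) := hx.1.aevalEquiv
    refine ⟨q.map (e.symm : _ →+* P), ?_, ?_⟩
    · exact (Polynomial.map_ne_zero_iff e.symm.injective).2 hq
    · rw [Polynomial.aeval_def, Polynomial.eval₂_map]
      rw [Polynomial.aeval_def] at hq0
      convert hq0 using 2
      ext z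
      obtain ⟨p, rfl⟩ := e.surjective z
      simp [hmap]
      rfl
  let F := FractionRing P
  let : Algebra F K := FractionRing.liftAlgebra P K
  have : IsScalarTower P F K := FractionRing.isScalarTower_liftAlgebra P K
  have : Algebra.IsAlgebraic F K := Algebra.IsAlgebraic.extendScalars (R := P) (IsFractionRing.injective P F)
  have : CharZero F := charZero_of_injective_algebraMap (algebraMap k F).injective
  have : Algebra.FormallyEtale F K := Algebra.FormallyEtale.of_isSeparable F K
  have : Algebra.FormallyEtale P F := Algebra.FormallyEtale.of_isLocalization (nonZeroDivisors P)
  have : Algebra.FormallyEtale P K := Algebra.FormallyEtale.comp P F K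
  let D : Derivation k P K := mkDerivation k v
  let ℓ : TensorProduct P K (Ω[P⁄k]) →ₗ[K] K := LinearMap.liftBaseChange K D.liftKaehlerDifferential
  let e := KaehlerDifferential.tensorKaehlerEquivOfFormallyEtale k P K
  let m : Ω[K⁄k] →ₗ[K] K := ℓ ∘ₗ e.symm.toLinearMap
  refine ⟨m.compDer (KaehlerDifferential.D k K), fun i => ?_⟩
  have h1 : x i = algebraMap P K (X i) := by rw [hmap, aeval_X]
  rw [h1]
  show ℓ (e.symm (KaehlerDifferential.D k K (algebraMap P K (X i)))) = v i
  rw [KaehlerDifferential.tensorKaehlerEquivOfFormallyEtale_symm_D_algebraMap]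
  simp only [ℓ, LinearMap.liftBaseChange_tmul, Derivation.liftKaehlerDifferential_comp_D, one_smul]
  exact mkDerivation_X ..

lemma derivation_aeval' {k K : Type} [Field k] [Field K] [Algebra k K] (δ : Derivation k K K) (w : K)
   (p : Polynomial k) : δ (Polynomial.aeval w p) = Polynomial.aeval w p.derivative * δ w := by
  induction p using Polynomial.induction_on' with
  | add p q hp hq => simp [hp, hq]; ring
  | monomial n a =>
    simp [Polynomial.aeval_monomial, Polynomial.derivative_monomial, Derivation.leibniz_pow]
    ring

lemma deg_contra {k : Type} [Field k] [CharZero k] (a b : Polynomial k) (ha : a ≠ 0) (hb : b ≠ 0)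
    (i j : ℕ) (hij : i ≠ j)
    (h : a * (b.derivative - Polynomial.C (j : k) * b) -
      b * (a.derivative - Polynomial.C (i : k) * a) = 0) : False := by
  have h1 : a * b * Polynomial.C ((j : k) - i) = a * b.derivative - b * a.derivative := by
    rw [Polynomial.C_sub]; linear_combination -h
  have hc : ((j : k) - i) ≠ 0 := by
    rw [sub_ne_zero]; exact_mod_cast hij.symm
  have hd : (a * b * Polynomial.C ((j : k) - i)).degree = a.degree + b.degree := by
    rw [Polynomial.degree_mul, Polynomial.degree_mul, Polynomial.degree_C hc, add_zero]
  have hlt : (a * b.derivative - b * a.derivative).degree < a.degree + b.degree := by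
    refine lt_of_le_of_lt (Polynomial.degree_sub_le _ _) (max_lt ?_ ?_)
    · rw [Polynomial.degree_mul]
      exact WithBot.add_lt_add_left (by simpa using ha) (Polynomial.degree_derivative_lt hb)
    · rw [Polynomial.degree_mul, add_comm]
      exact WithBot.add_lt_add_right (by simpa using hb) (Polynomial.degree_derivative_lt ha)
  rw [← h1, hd] at hlt
  exact lt_irrefl _ hlt

lemma rel_zero {k K : Type} [Field k] [CharZero k] [Field K] [Algebra k K] (w u : K) (hu : u ≠ 0)
    (hw : Transcendental k w) (δ : Derivation k K K) (h1 : δ w = 1) (h2 : δ u = -u)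
    (s : Finset ℕ) : ∀ (a : ℕ → Polynomial k),
    ∑ j ∈ s, Polynomial.aeval w (a j) * u ^ j = 0 → ∀ j ∈ s, a j = 0 := by
  have hinj := transcendental_iff_injective.1 hw
  induction s using Finset.strongInduction with
  | H s ih =>
  intro a ha
  by_cases hz : ∃ i ∈ s, a i = 0
  · obtain ⟨i, hi, hai⟩ := hz
    have := ih (s.erase i) (Finset.erase_ssubset hi) a (by
      rw [← Finset.add_sum_erase _ _ hi, hai] at ha
      simpa using ha)
    intro j hj
    by_cases hji : j = i
    · rw [hji, hai]
    · exact this j (Finset.mem_erase.2 ⟨hji, hj⟩)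
  · push Not at hz
    rcases s.eq_empty_or_nonempty with rfl | ⟨i, hi⟩
    · simp
    exfalso
    have hd : ∑ j ∈ s, Polynomial.aeval w ((a j).derivative - Polynomial.C (j : k) * a j) * u ^ j = 0 := by
      have := congrArg δ ha
      rw [map_sum, map_zero] at this
      rw [← this]
      refine Finset.sum_congr rfl fun j _ => ?_
      rw [Derivation.leibniz, Derivation.leibniz_pow, h2, derivation_aeval', h1]
      rcases j with _ | j
      · simp
      · simp [pow_succ]
        ring
    have hb := ih (s.erase i) (Finset.erase_ssubset hi) (fun j => 
       a i * ((a j).derivative - Polynomial.C (j : k) * (a j)) -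
      a j * ((a i).derivative - Polynomial.C (i : k) * (a i))) (by
        have e : ∑ j ∈ s, Polynomial.aeval w (a i * ((a j).derivative - Polynomial.C (j : k) * (a j)) -
           a j * ((a i).derivative - Polynomial.C (i : k) * (a i))) * u ^ j = 0 := by
          have : ∀ j, Polynomial.aeval w (a i * ((a j).derivative - Polynomial.C (j : k) * (a j)) -
           a j * ((a i).derivative - Polynomial.C (i : k) * (a i))) * u ^ j = 
            Polynomial.aeval w (a i) * (Polynomial.aeval w ((a j).derivative - Polynomial.C (j : k) * (a j)) * u ^ j)
            - Polynomial.aeval w ((a i).derivative - Polynomial.C (i : k) * (a i)) * (Polynomial.aeval w (a j) * u ^ j) := by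
            intro j; simp only [map_sub, map_mul]; ring
          simp only [this]
          rw [Finset.sum_sub_distrib, ← Finset.mul_sum, ← Finset.mul_sum, hd, ha]; simp
        rw [← Finset.add_sum_erase _ _ hi] at e
        simpa using e)
    rcases (s.erase i).eq_empty_or_nonempty with he | ⟨j, hj⟩
    · have hs : s = {i} := by
        rw [← Finset.insert_erase hi, he]; rfl
      rw [hs, Finset.sum_singleton] at ha
      rcases mul_eq_zero.1 ha with h | h
      · exact hz i hi (hinj (by rw [h, map_zero]))
      · exact hu (eq_zero_of_pow_eq_zero h)
    · exact deg_contra _ _ (hz i hi) (hz j (Finset.mem_of_mem_erase hj)) i j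
        (Finset.ne_of_mem_erase hj).symm (hb j hj)

lemma exists_der {k K : Type} [Field k] [CharZero k] [Field K] [Algebra k K] (w u : K) (hu : u ≠ 0)
    (hw : Transcendental k w) : ∃ δ : Derivation k K K, δ u + u * δ w ≠ 0 := by
  by_contra hcon
  push Not at hcon
  have key : ∀ s : Set K, AlgebraicIndepOn k id s → ∀ v : K → K, ∃ δ : Derivation k K K, ∀ x ∈ s, δ x = v x := by
    intro s hs v
    obtain ⟨t, hst, ht⟩ := exists_isTranscendenceBasis_superset hs
    obtain ⟨δ, hδ⟩ := derExt _ ht (fun x => v x)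
    exact ⟨δ, fun x hx => hδ ⟨x, hst hx⟩⟩
  have hw' : AlgebraicIndepOn k id {w} := by
    simpa using hw
  obtain ⟨δ, hδ⟩ := key {w} hw' (fun _ => 1)
  have h1 := hδ w rfl
  have h2 : δ u = -u := by have := hcon δ; rw [h1] at this; linear_combination this
  have hT : Transcendental (Algebra.adjoin k ({w} : Set K)) u := by
    rintro ⟨q, hq, hq0⟩
    have hl : ∀ j, ∃ a : Polynomial k, Polynomial.aeval w a = (q.coeff j : K) := by
      intro j
      have := (q.coeff j).2
      have h3 := (SetLike.ext_iff.1 (Algebra.adjoin_singleton_eq_range_aeval k w) (q.coeff j : K)).1 this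
      exact h3
    choose a ha using hl
    apply hq
    have := rel_zero w u hu hw δ h1 h2 (Finset.range (q.natDegree + 1)) a (by
      rw [Polynomial.aeval_eq_sum_range] at hq0
      rw [← hq0]
      refine Finset.sum_congr rfl fun j _ => ?_
      rw [ha]; rfl)
    ext j
    by_cases hj : j ∈ Finset.range (q.natDegree + 1)
    · rw [← ha, this j hj]; simp
    · rw [Polynomial.coeff_eq_zero_of_natDegree_lt (by simpa using hj)]; rfl
  have hne : u ≠ w := by
    rintro rfl
    exact hT (isAlgebraic_algebraMap (⟨u, Algebra.subset_adjoin rfl⟩ : Algebra.adjoin k ({u} : Set K)))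
  have hi : AlgebraicIndepOn k id ({u, w} : Set K) := by
    refine AlgebraicIndepOn.insert hw' ?_
    rwa [Set.image_id]
  obtain ⟨δ', hδ'⟩ := key _ hi (fun x => open Classical in if x = w then 1 else 0)
  have := hcon δ'
  rw [hδ' u (by simp), hδ' w (by simp)] at this
  simp [hne, hu] at this

lemma exists_polyder {n : ℕ} (I : Ideal (MvPolynomial (Fin n) ℂ)) (hI : I.IsPrime)
    (c0 c1 w : MvPolynomial (Fin n) ℂ) (h0 : c0 ∉ I) (h1 : c1 ∉ I) (hw : ∀ c, w - C c ∉ I) :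
    ∃ D : Derivation ℂ (MvPolynomial (Fin n) ℂ) (MvPolynomial (Fin n) ℂ),
      (∀ p ∈ I, D p ∈ I) ∧ c0 * D c1 - c1 * D c0 + c0 * c1 * D w ∉ I := by
  let P := MvPolynomial (Fin n) ℂ
  let A := P ⧸ I
  let K := FractionRing A
  have hinj : Function.Injective (algebraMap A K) := IsFractionRing.injective A K
  let π : P →ₐ[ℂ] K := (IsScalarTower.toAlgHom ℂ A K).comp (Ideal.Quotient.mkₐ ℂ I)
  have hπ' : ∀ p, π p = algebraMap A K (Ideal.Quotient.mk I p) := fun p => rfl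
  have hπ : ∀ p, π p = 0 ↔ p ∈ I := by
    intro p
    rw [hπ', map_eq_zero_iff _ hinj, Ideal.Quotient.eq_zero_iff_mem]
  have hwt : Transcendental ℂ (π w) := by
    intro halg
    have hd := IsAlgClosed.degree_eq_one_of_irreducible ℂ (minpoly.irreducible halg.isIntegral)
    obtain ⟨c, hc⟩ := minpoly.mem_range_of_degree_eq_one ℂ (π w) hd
    apply hw c
    have : π (C c) = algebraMap ℂ K c := π.commutes c
    rw [← hπ, map_sub, this, hc, sub_self]
  have h0' : π c0 ≠ 0 := fun h => h0 ((hπ _).1 h)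
  have h1' : π c1 ≠ 0 := fun h => h1 ((hπ _).1 h)
  obtain ⟨δ, hδ⟩ := exists_der (π w) (π c1 / π c0) (div_ne_zero h1' h0') hwt
  obtain ⟨b, hb⟩ := IsLocalization.exist_integer_multiples_of_finite (nonZeroDivisors A)
    (fun i : Fin n => δ (π (X i)))
  choose a' ha' using hb
  choose a ha using fun i => Ideal.Quotient.mk_surjective (a' i)
  let D : Derivation ℂ P P := mkDerivation ℂ a
  have hb0 : algebraMap A K (b : A) ≠ 0 := by
    rw [Ne, map_eq_zero_iff _ hinj]
    exact nonZeroDivisors.coe_ne_zero b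
  have hD : ∀ p, π (D p) = algebraMap A K (b : A) * δ (π p) := by
    intro p
    induction p using MvPolynomial.induction_on with
    | C c =>
      have e1 : D (C c) = 0 := D.map_algebraMap c
      have e2 : δ (π (C c)) = 0 := by
        have : π (C c) = algebraMap ℂ K c := π.commutes c
        rw [this]; exact δ.map_algebraMap c
      rw [e1, e2]; simp
    | add p q hp hq => rw [map_add, map_add, map_add, map_add, hp, hq]; ring
    | mul_X p i hp =>
      rw [Derivation.leibniz, map_mul, Derivation.leibniz, map_add, smul_eq_mul, smul_eq_mul,
        map_mul, map_mul, hp]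
      have : π (D (X i)) = algebraMap A K (b : A) * δ (π (X i)) := by
        rw [mkDerivation_X, hπ', ha, ha', Algebra.smul_def]
      rw [this]; simp only [smul_eq_mul]; ring
  refine ⟨D, fun p hp => ?_, fun h => ?_⟩
  · rw [← hπ, hD, (hπ p).2 hp]; simp
  · rw [← hπ] at h
    simp only [map_add, map_sub, map_mul, hD] at h
    apply hδ
    have e : π c1 = π c0 * (π c1 / π c0) := (mul_div_cancel₀ _ h0').symm
    have e3 := congrArg δ e
    rw [Derivation.leibniz] at e3
    simp only [smul_eq_mul] at e3
    set u := π c1 / π c0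
    rw [e3, e] at h
    have : algebraMap A K (b : A) * (π c0)^2 * (δ u + u * δ (π w)) = 0 := by
      linear_combination h
    simpa [hb0, h0'] using this

lemma hasDerivAt_eval {n : ℕ} 
    (D : Derivation ℂ (MvPolynomial (Fin n) ℂ) (MvPolynomial (Fin n) ℂ))
    (γ : ℝ → Fin n → ℂ) (t : ℝ) (h : HasDerivAt γ (fun i => eval (γ t) (D (X i))) t)
    (p : MvPolynomial (Fin n) ℂ) :
    HasDerivAt (fun t => eval (γ t) p) (eval (γ t) (D p)) t := by
  induction p using MvPolynomial.induction_on with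
  | C c =>
    have e1 : D (C c) = 0 := D.map_algebraMap c
    simp only [eval_C, e1, map_zero]
    exact hasDerivAt_const _ _
  | add p q hp hq =>
    simp only [map_add]
    exact hp.add hq
  | mul_X p i hp =>
    have := hp.mul (hasDerivAt_pi.1 h i)
    simp only [map_mul, eval_X, Derivation.leibniz, map_add, smul_eq_mul]
    refine this.congr_deriv ?_
    ring

lemma flow {n : ℕ} (S : Set (Fin n → ℂ)) (I : Ideal (MvPolynomial (Fin n) ℂ))
    (hS : ∀ z, z ∈ S ↔ ∀ p ∈ I, eval z p = 0)
    (D : Derivation ℂ (MvPolynomial (Fin n) ℂ) (MvPolynomial (Fin n) ℂ))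
    (hD : ∀ p ∈ I, D p ∈ I) (s : Fin n → ℂ) (hs : s ∈ S) :
    ∃ γ : ℝ → Fin n → ℂ, γ 0 = s ∧ HasDerivAt γ (fun i => eval (γ 0) (D (X i))) 0 ∧
      ∃ ε > (0 : ℝ), ∀ t ∈ Set.Icc 0 ε, γ t ∈ S := by
  have hsm : ∀ p : MvPolynomial (Fin n) ℂ, ContDiff ℝ 1 (fun z : Fin n → ℂ => eval z p) := by
    intro p
    induction p using MvPolynomial.induction_on with
    | C c => simpa using contDiff_const
    | add p q hp hq => simpa using hp.add hq
    | mul_X p i hp => 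
      simp only [map_mul, eval_X]
      exact hp.mul (contDiff_apply ℝ ℂ i)
  have hf : ContDiff ℝ 1 (fun z : Fin n → ℂ => fun i => eval z (D (X i))) :=
    contDiff_pi.2 fun i => hsm _
  obtain ⟨γ, h0, ε, hε, hγ⟩ := hf.contDiffAt.exists_forall_mem_closedBall_exists_eq_forall_mem_Ioo_hasDerivAt₀ (x₀ := s) 0
  refine ⟨γ, h0, hγ 0 (by simp [hε]), ε / 2, by positivity, ?_⟩
  obtain ⟨m, g, hg⟩ := Submodule.fg_iff_exists_fin_generating_family.1 ((isNoetherianRing_iff_ideal_fg _).1 inferInstance I)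
  have hgI : ∀ j, g j ∈ I := fun j => hg ▸ Submodule.subset_span ⟨j, rfl⟩
  have hh : ∀ j, ∃ h : Fin m → MvPolynomial (Fin n) ℂ, ∑ k, h k * g k = D (g j) := by
    intro j
    have := hD _ (hgI j)
    rw [← hg] at this
    exact Ideal.mem_span_range_iff_exists_fun.1 this
  choose h hh using hh
  have hd : ∀ t ∈ Set.Icc 0 (ε/2), ∀ p, HasDerivAt (fun t => eval (γ t) p) (eval (γ t) (D p)) t := by
    intro t ht p
    apply hasDerivAt_eval
    exact hγ t ⟨by linarith [ht.1], by linarith [ht.2]⟩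
  have hc : ∀ p, ContinuousOn (fun t => eval (γ t) p) (Set.Icc 0 (ε/2)) := fun p t ht =>
    (hd t ht p).continuousAt.continuousWithinAt
  have hbd : ∀ p, ∃ B, ∀ t ∈ Set.Icc 0 (ε/2), ‖eval (γ t) p‖ ≤ B := fun p =>
    isCompact_Icc.exists_bound_of_continuousOn (hc p)
  choose B hB using hbd
  have hB0 : ∀ p, 0 ≤ B p := fun p => (norm_nonneg _).trans (hB p 0 ⟨le_rfl, by positivity⟩)
  have key := eq_zero_of_abs_deriv_le_mul_abs_self_of_eq_zero_right
    (f := fun t => fun j => eval (γ t) (g j)) (f' := fun t => fun j => eval (γ t) (D (g j)))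
    (a := 0) (b := ε / 2) (K := ∑ j, ∑ k, B (h j k))
    (continuousOn_pi.2 fun j => hc _)
    (fun t ht => (hasDerivAt_pi.2 fun j => hd t ⟨ht.1, ht.2.le⟩ _).hasDerivWithinAt)
    (by ext j; rw [h0]; exact (hS s).1 hs _ (hgI j))
    (by
      intro t ht
      have hK : 0 ≤ ∑ j, ∑ k, B (h j k) := Finset.sum_nonneg fun j _ => Finset.sum_nonneg fun k _ => hB0 _
      refine (pi_norm_le_iff_of_nonneg (mul_nonneg hK (norm_nonneg _))).2 fun j => ?_
      rw [← hh j, map_sum]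
      refine (norm_sum_le _ _).trans ?_
      calc ∑ k, ‖eval (γ t) (h j k * g k)‖ ≤ ∑ k, B (h j k) * ‖fun j => eval (γ t) (g j)‖ := by
            refine Finset.sum_le_sum fun k _ => ?_
            rw [map_mul, norm_mul]
            exact mul_le_mul (hB _ t ⟨ht.1, ht.2.le⟩) (norm_le_pi_norm (fun j => eval (γ t) (g j)) k) (norm_nonneg _) (hB0 _)
        _ = (∑ k, B (h j k)) * ‖fun j => eval (γ t) (g j)‖ := by rw [Finset.sum_mul]
        _ ≤ _ := by
            refine mul_le_mul_of_nonneg_right ?_ (norm_nonneg _)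
            exact Finset.single_le_sum (f := fun j => ∑ k, B (h j k)) (fun j _ => Finset.sum_nonneg fun k _ => hB0 _) (Finset.mem_univ j))
  intro t ht
  rw [hS]
  intro p hp
  rw [← hg] at hp
  obtain ⟨c, rfl⟩ := Ideal.mem_span_range_iff_exists_fun.1 hp
  rw [map_sum]
  refine Finset.sum_eq_zero fun k _ => ?_
  have := congrFun (key t ht) k
  simp only [Pi.zero_apply] at this
  rw [map_mul, this, mul_zero]

lemma vanish_der {n : ℕ} (S : Set (Fin n → ℂ)) (I : Ideal (MvPolynomial (Fin n) ℂ))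
    (hS : ∀ z, z ∈ S ↔ ∀ p ∈ I, eval z p = 0)
    (D : Derivation ℂ (MvPolynomial (Fin n) ℂ) (MvPolynomial (Fin n) ℂ))
    (hD : ∀ p ∈ I, D p ∈ I) {ι : Type} (s : Finset ι) (c f : ι → MvPolynomial (Fin n) ℂ)
    (h : ∀ z ∈ S, ∑ i ∈ s, eval z (c i) * Complex.exp (eval z (f i)) = 0) :
    ∀ z ∈ S, ∑ i ∈ s, eval z (D (c i) + c i * D (f i)) * Complex.exp (eval z (f i)) = 0 := by
  intro z hz
  obtain ⟨γ, h0, hγ, ε, hε, hγS⟩ := flow S I hS D hD z hz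
  have h1 : HasDerivAt (fun t => ∑ i ∈ s, eval (γ t) (c i) * Complex.exp (eval (γ t) (f i)))
      (∑ i ∈ s, eval z (D (c i) + c i * D (f i)) * Complex.exp (eval z (f i))) 0 := by
    refine (HasDerivAt.fun_sum fun i _ => (hasDerivAt_eval D γ 0 hγ (c i)).mul
      (hasDerivAt_eval D γ 0 hγ (f i)).cexp).congr_deriv ?_
    refine Finset.sum_congr rfl fun i _ => ?_
    rw [h0, map_add, map_mul]; ring
  have h2 : HasDerivWithinAt (fun t => ∑ i ∈ s, eval (γ t) (c i) * Complex.exp (eval (γ t) (f i)))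
      0 (Set.Icc 0 ε) 0 := by
    refine (hasDerivWithinAt_const 0 _ (0:ℂ)).congr (fun t ht => h _ (hγS t ht)) (h _ (hγS 0 ⟨le_rfl, hε.le⟩))
  exact (uniqueDiffOn_Icc hε 0 ⟨le_rfl, hε.le⟩).eq_deriv _ h1.hasDerivWithinAt h2

theorem expLin {n : ℕ} (S : Set (Fin n → ℂ)) (I : Ideal (MvPolynomial (Fin n) ℂ)) (hIp : I.IsPrime)
    (hI : ∀ p, p ∈ I ↔ ∀ z ∈ S, eval z p = 0)
    (hS : ∀ z, z ∈ S ↔ ∀ p ∈ I, eval z p = 0)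
    {ι : Type} [DecidableEq ι] (f : ι → MvPolynomial (Fin n) ℂ) (s : Finset ι) : 
    (∀ i ∈ s, ∀ j ∈ s, i ≠ j → ∀ c, f i - f j - C c ∉ I) → ∀ (c : ι → MvPolynomial (Fin n) ℂ),
    (∀ z ∈ S, ∑ i ∈ s, eval z (c i) * Complex.exp (eval z (f i)) = 0) → ∀ i ∈ s, c i ∈ I := by
  induction s using Finset.strongInduction with
  | H s ih =>
  intro hf c h
  by_cases hz : ∃ i ∈ s, c i ∈ I
  · obtain ⟨i, hi, hai⟩ := hz
    have := ih (s.erase i) (Finset.erase_ssubset hi) 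
      (fun a ha b hb => hf a (Finset.mem_of_mem_erase ha) b (Finset.mem_of_mem_erase hb)) c (by
      intro z hz
      have ha := h z hz
      rw [← Finset.add_sum_erase _ _ hi, (hI _).1 hai z hz] at ha
      simpa using ha)
    intro j hj
    by_cases hji : j = i
    · rw [hji]; exact hai
    · exact this j (Finset.mem_erase.2 ⟨hji, hj⟩)
  · push Not at hz
    rcases s.eq_empty_or_nonempty with rfl | ⟨i, hi⟩
    · simp
    exfalso
    have hb : ∀ D : Derivation ℂ (MvPolynomial (Fin n) ℂ) (MvPolynomial (Fin n) ℂ),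
        (∀ p ∈ I, D p ∈ I) → ∀ j ∈ s.erase i, 
          c i * (D (c j) + c j * D (f j)) - c j * (D (c i) + c i * D (f i)) ∈ I := by
      intro D hD
      refine ih (s.erase i) (Finset.erase_ssubset hi) 
        (fun a ha b hb => hf a (Finset.mem_of_mem_erase ha) b (Finset.mem_of_mem_erase hb)) 
        (fun j => c i * (D (c j) + c j * D (f j)) - c j * (D (c i) + c i * D (f i))) ?_
      intro z hz
      have hd := vanish_der S I hS D hD s c f h z hz
      have ha := h z hz
      have e : ∑ j ∈ s, eval z (c i * (D (c j) + c j * D (f j)) - c j * (D (c i) + c i * D (f i))) * Complex.exp (eval z (f j)) = 0 := by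
        have : ∀ j, eval z (c i * (D (c j) + c j * D (f j)) - c j * (D (c i) + c i * D (f i))) * Complex.exp (eval z (f j)) = 
          eval z (c i) * (eval z (D (c j) + c j * D (f j)) * Complex.exp (eval z (f j)))
          - eval z (D (c i) + c i * D (f i)) * (eval z (c j) * Complex.exp (eval z (f j))) := by
          intro j; simp only [map_sub, map_mul]; ring
        simp only [this]
        rw [Finset.sum_sub_distrib, ← Finset.mul_sum, ← Finset.mul_sum, hd, ha]; simp
      rw [← Finset.add_sum_erase _ _ hi] at e
      rw [← e]
      simp
    rcases (s.erase i).eq_empty_or_nonempty with he | ⟨j, hj⟩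
    · have hs : s = {i} := by
        rw [← Finset.insert_erase hi, he]; rfl
      apply hz i hi
      rw [hI]
      intro z hz
      have := h z hz
      rw [hs, Finset.sum_singleton] at this
      simpa using this
    · have hjs := Finset.mem_of_mem_erase hj
      obtain ⟨D, hD, hD'⟩ := exists_polyder I hIp (c i) (c j) (f j - f i) (hz i hi) (hz j hjs)
        (hf j hjs i hi (Finset.ne_of_mem_erase hj))
      apply hD'
      convert hb D hD j hj using 1
      rw [map_sub]; ring

lemma lattice {n : ℕ} (L : Submodule ℤ (Fin n → ℤ))
    (hL : ∀ (k : ℤ) (m : Fin n → ℤ), k ≠ 0 → k • m ∈ L → m ∈ L) :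
    ∃ (r : ℕ) (A : Matrix (Fin n) (Fin r) ℤ) (B : Matrix (Fin r) (Fin n) ℤ),
      (∀ m, m ∈ L ↔ Matrix.vecMul m A = 0) ∧ B * A = 1 := by
  have htf : Module.IsTorsionFree ℤ ((Fin n → ℤ) ⧸ L) := by
    refine ⟨fun k hk => ?_⟩
    rw [isSMulRegular_iff_right_eq_zero_of_smul]
    intro x hx
    obtain ⟨m, rfl⟩ := Submodule.Quotient.mk_surjective L x
    rw [← Submodule.Quotient.mk_smul, Submodule.Quotient.mk_eq_zero] at hx
    rw [Submodule.Quotient.mk_eq_zero]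
    exact hL k m hk.ne_zero hx
  have hfree : Module.Free ℤ ((Fin n → ℤ) ⧸ L) := Module.free_of_finite_type_torsion_free'
  let b := Module.finBasis ℤ ((Fin n → ℤ) ⧸ L)
  let r := Module.finrank ℤ ((Fin n → ℤ) ⧸ L)
  let π : (Fin n → ℤ) →ₗ[ℤ] (Fin r → ℤ) := b.equivFun.toLinearMap ∘ₗ L.mkQ
  have hπs : Function.Surjective π := b.equivFun.surjective.comp L.mkQ_surjective
  obtain ⟨σ, hσ⟩ := Module.projective_lifting_property π LinearMap.id hπs
  refine ⟨r, (LinearMap.toMatrix' π).transpose, (LinearMap.toMatrix' σ).transpose, ?_, ?_⟩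
  · intro m
    rw [Matrix.vecMul_transpose, LinearMap.toMatrix'_mulVec]
    simp [π]
  · rw [← Matrix.transpose_mul, ← LinearMap.toMatrix'_comp, hσ]
    simp

lemma algpt {n : ℕ} (P : Set (MvPolynomial (Fin n) ℂ)) (hP : ∀ p ∈ P, ∀ m, IsAlgebraic ℚ (coeff m p))
    (q : MvPolynomial (Fin n) ℚ) (z : Fin n → ℂ) (hz : ∀ p ∈ P, eval z p = 0) (hq : aeval z q ≠ 0) :
    ∃ a : Fin n → ℂ, (∀ i, IsAlgebraic ℚ (a i)) ∧ (∀ p ∈ P, eval a p = 0) ∧ aeval a q ≠ 0 := by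
  by_contra hcon
  push Not at hcon
  let k := algebraicClosure ℚ ℂ
  have hk : IsAlgClosed k := (algebraicClosure.isAlgClosure ℚ ℂ).1
  let J : Ideal (MvPolynomial (Fin n) k) := Ideal.span {p | map (algebraMap k ℂ) p ∈ P}
  have hmem : map (algebraMap ℚ k) q ∈ vanishingIdeal k (zeroLocus k J) := by
    intro x hx
    have h1 := hcon (fun i => (x i : ℂ)) (fun i => (mem_algebraicClosure_iff).1 (x i).2) (by
      intro p hp
      obtain ⟨p', rfl⟩ : p ∈ Set.range (map (algebraMap k ℂ)) := by
        rw [mem_range_map_iff_coeffs_subset]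
        intro c hc
        obtain ⟨m, hm, rfl⟩ := mem_coeffs_iff.1 hc
        exact ⟨⟨_, mem_algebraicClosure_iff.2 (hP p hp m)⟩, rfl⟩
      have := hx p' (Ideal.subset_span hp)
      rw [eval_map]
      have h2 := congrArg (algebraMap k ℂ) this
      rw [map_zero, aeval_def, eval₂_comp_left] at h2
      exact h2)
    apply (algebraMap k ℂ).injective
    rw [map_zero, ← h1, aeval_def, eval₂_comp_left, eval₂_map, aeval_def]
    rfl
  rw [vanishingIdeal_zeroLocus_eq_radical] at hmem
  obtain ⟨N, hN⟩ := hmem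
  have hJ : ∀ p ∈ J, eval₂ (algebraMap k ℂ) z p = 0 := by
    intro p hp
    have : J ≤ RingHom.ker (eval₂Hom (algebraMap k ℂ) z) := by
      rw [Ideal.span_le]
      intro p hp
      have := hz _ hp
      rw [eval_map] at this
      exact this
    exact this hp
  have := hJ _ hN
  rw [eval₂_pow, eval₂_map] at this
  exact hq (eq_zero_of_pow_eq_zero this)

lemma divide_zeros (s : Finset ℂ) : ∀ f : ℂ → ℂ, Differentiable ℂ f → (∀ w ∈ s, f w = 0) →
    ∃ g : ℂ → ℂ, Differentiable ℂ g ∧ ∀ z, f z = (∏ w ∈ s, (z - w)) * g z := by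
  classical
  induction s using Finset.induction_on with
  | empty => intro f hf _; exact ⟨f, hf, by simp⟩
  | insert a s ha ih =>
    intro f hf hz
    have hd : Differentiable ℂ (dslope f a) := by
      rw [← differentiableOn_univ] at hf ⊢
      exact (Complex.differentiableOn_dslope Filter.univ_mem).2 hf
    have hfd : ∀ z, f z = (z - a) * dslope f a z := by
      intro z
      have := sub_smul_dslope f a z
      rw [hz a (Finset.mem_insert_self _ _), sub_zero, smul_eq_mul] at this
      exact this.symm
    obtain ⟨g, hg, hgz⟩ := ih (dslope f a) hd (by
      intro w hw
      have h1 := hfd w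
      rw [hz w (Finset.mem_insert_of_mem hw)] at h1
      rcases mul_eq_zero.1 h1.symm with h | h
      · exact absurd (sub_eq_zero.1 h ▸ hw) ha
      · exact h)
    refine ⟨g, hg, fun z => ?_⟩
    rw [hfd, hgz, Finset.prod_insert ha, mul_assoc]

lemma schwarz (f : ℂ → ℂ) (hf : Differentiable ℂ f) (s : Finset ℂ) (ρ B : ℝ) (hρ : 0 < ρ)
    (hs : ∀ w ∈ s, f w = 0 ∧ ‖w‖ ≤ ρ) (hB : ∀ z, ‖z‖ ≤ 5 * ρ → ‖f z‖ ≤ B) (z₀ : ℂ)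
    (hz₀ : ‖z₀‖ ≤ ρ) : ‖f z₀‖ ≤ B * (1/2) ^ s.card := by
  obtain ⟨g, hg, hgz⟩ := divide_zeros s f hf (fun w hw => (hs w hw).1)
  have hfr : ∀ z ∈ frontier (Metric.ball (0:ℂ) (5 * ρ)), ‖g z‖ ≤ B / (4 * ρ) ^ s.card := by
    intro z hz
    rw [frontier_ball _ (by positivity), mem_sphere_zero_iff_norm] at hz
    have h1 : (4 * ρ) ^ s.card ≤ ‖∏ w ∈ s, (z - w)‖ := by
      rw [norm_prod, ← Finset.prod_const]
      apply Finset.prod_le_prod (fun _ _ => by positivity)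
      intro w hw
      have := norm_sub_norm_le z w
      have := (hs w hw).2
      linarith
    have h2 := hB z hz.le
    rw [hgz, norm_mul] at h2
    rw [le_div_iff₀ (by positivity), mul_comm]
    exact (mul_le_mul_of_nonneg_right h1 (norm_nonneg _)).trans h2
  have h3 := Complex.norm_le_of_forall_mem_frontier_norm_le Metric.isBounded_ball hg.diffContOnCl hfr
    (z := z₀) (subset_closure (by rw [mem_ball_zero_iff]; linarith))
  have h4 : ‖∏ w ∈ s, (z₀ - w)‖ ≤ (2 * ρ) ^ s.card := by
    rw [norm_prod, ← Finset.prod_const]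
    apply Finset.prod_le_prod (fun _ _ => by positivity)
    intro w hw
    have := norm_sub_le z₀ w
    have := (hs w hw).2
    linarith
  rw [hgz, norm_mul]
  calc _ ≤ (2 * ρ) ^ s.card * (B / (4 * ρ) ^ s.card) := by gcongr
    _ = B * (1/2) ^ s.card := by
      rw [show (4:ℝ) * ρ = 2 * (2 * ρ) by ring, mul_pow 2 (2*ρ)]
      rw [one_div, inv_pow]; field_simp

open NumberField in
lemma liouville {K : Type} [Field K] [NumberField K] (φ : K →+* ℂ) (x : K) (hx : x ≠ 0)
    (hi : IsIntegral ℤ x) : 1 ≤ ‖φ x‖ * house x ^ (Module.finrank ℚ K - 1) := by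
  refine le_trans ?_ (norm_norm_le_norm_mul_house_pow x φ)
  have h1 : IsIntegral ℤ (Algebra.norm ℚ x) := Algebra.isIntegral_norm ℚ hi
  obtain ⟨m, hm⟩ := IsIntegrallyClosed.isIntegral_iff.1 h1
  have h0 : Algebra.norm ℚ x ≠ 0 := by rwa [Algebra.norm_ne_zero_iff]
  rw [← hm] at h0 ⊢
  simp only [eq_intCast] at h0 ⊢
  have : m ≠ 0 := by exact_mod_cast h0
  have h2 := Int.one_le_abs this
  rw [show ‖(m:ℚ)‖ = |(m:ℝ)| by simp [Int.norm_eq_abs]]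
  exact_mod_cast h2

open NumberField in
lemma siegel (K : Type) [Field K] [NumberField K] : ∃ C : ℝ, 1 ≤ C ∧ ∀ (α β : Type) [Fintype α] [Fintype β]
    (p : ℕ) (a : Matrix α β (𝓞 K)) (A : ℝ), 0 < p → Fintype.card α = p → Fintype.card β = 2 * p →
    a ≠ 0 → (∀ k l, house (algebraMap (𝓞 K) K (a k l)) ≤ A) →
    ∃ ξ : β → 𝓞 K, ξ ≠ 0 ∧ a.mulVec ξ = 0 ∧ ∀ l, house (algebraMap (𝓞 K) K (ξ l)) ≤ C * (p * A) := by
  classical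
  have key : ∃ c : ℝ, ∀ (α β : Type) [Fintype α] [Fintype β]
    (p : ℕ) (a : Matrix α β (𝓞 K)) (A : ℝ), 0 < p → Fintype.card α = p → Fintype.card β = 2 * p →
    a ≠ 0 → (∀ k l, house (algebraMap (𝓞 K) K (a k l)) ≤ A) →
    ∃ ξ : β → 𝓞 K, ξ ≠ 0 ∧ a.mulVec ξ = 0 ∧ ∀ l, house (ξ l).1 ≤
      c * ((c * (2 * p : ℕ) * A) ^ ((p : ℝ) / ((2 * p : ℕ) - p))) := by
    refine ⟨?c, ?_⟩
    rotate_left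
    intro α β _ _ p a A hp hα hβ ha hA
    exact house.exists_ne_zero_int_vec_house_le K a ha hp (by omega) hβ hA hα
  obtain ⟨c, hc⟩ := key
  refine ⟨max 1 (2 * c ^ 2), le_max_left _ _, ?_⟩
  intro α β _ _ p a A hp hα hβ ha hA
  obtain ⟨ξ, h1, h2, h3⟩ := hc α β p a A hp hα hβ ha hA
  refine ⟨ξ, h1, h2, fun l => (h3 l).trans ?_⟩
  have hA0 : 0 ≤ A := by
    obtain ⟨k⟩ := Fintype.card_pos_iff.1 (hα ▸ hp)
    exact (house_nonneg _).trans (hA k l)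
  have hp' : (p:ℝ) ≠ 0 := by positivity
  have : (p : ℝ) / ((2 * p : ℕ) - p) = 1 := by
    push_cast
    rw [show (2:ℝ) * p - p = p by ring, div_self hp']
  rw [this, Real.rpow_one]
  calc _ = (2 * c^2) * (p * A) := by push_cast; ring
    _ ≤ _ := by gcongr; exact le_max_right _ _

lemma asymp (A H : ℝ) (c : ℕ) : ∃ k : ℕ, 1 ≤ k ∧ ∀ M : ℕ, k ^ 2 ≤ M → 
    (A * (H * M) ^ c) ^ k < (2:ℝ) ^ M := by
  have h1 : Filter.Tendsto (fun s : ℝ => (|A| * |H| ^ c) * (s ^ (2 * c) * Real.exp (-(Real.log 2) * s)))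
      Filter.atTop (nhds 0) := by
    have := (tendsto_rpow_mul_exp_neg_mul_atTop_nhds_zero (2 * c : ℝ) (Real.log 2) (Real.log_pos (by norm_num))).const_mul (|A| * |H| ^ c)
    rw [mul_zero] at this
    refine this.congr fun s => ?_
    rw [← Real.rpow_natCast s (2 * c)]
    push_cast
    rfl
  have h2 : Filter.Tendsto (fun M : ℕ => Real.sqrt M) Filter.atTop Filter.atTop :=
    Real.tendsto_sqrt_atTop.comp tendsto_natCast_atTop_atTop
  obtain ⟨M₀, hM₀⟩ := Filter.eventually_atTop.1 ((h1.comp h2).eventually_lt_const one_pos)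
  refine ⟨M₀ + 1, by omega, fun M hM => ?_⟩
  have h3 := hM₀ M (by nlinarith)
  simp only [Function.comp] at h3
  rw [pow_mul, Real.sq_sqrt (Nat.cast_nonneg _), neg_mul, Real.exp_neg, ← mul_assoc, ← div_eq_mul_inv,
    div_lt_one (Real.exp_pos _)] at h3
  have h4 : ((M₀ + 1 : ℕ) : ℝ) ≤ Real.sqrt M := by
    apply Real.le_sqrt_of_sq_le
    exact_mod_cast hM
  calc (A * (H * M) ^ c) ^ (M₀ + 1) ≤ |A * (H * M) ^ c| ^ (M₀ + 1) := by
        rw [← abs_pow]; exact le_abs_self _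
    _ = (|A| * |H| ^ c * M ^ c) ^ (M₀ + 1) := by
        rw [abs_mul, abs_pow, abs_mul, Nat.abs_cast, mul_pow |H|, mul_assoc]
    _ < (Real.exp (Real.log 2 * Real.sqrt M)) ^ (M₀ + 1) := by
        apply pow_lt_pow_left₀ h3 (by positivity) (by omega)
    _ = Real.exp ((M₀ + 1 : ℕ) * (Real.log 2 * Real.sqrt M)) := by rw [Real.exp_nat_mul]
    _ ≤ Real.exp (M * Real.log 2) := by
        apply Real.exp_le_exp.2
        have h5 := Real.mul_self_sqrt (Nat.cast_nonneg (α := ℝ) M)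
        have h6 := Real.log_nonneg (show (1:ℝ) ≤ 2 by norm_num)
        have h7 := mul_le_mul_of_nonneg_right h4 (Real.sqrt_nonneg M)
        nlinarith
    _ = 2 ^ M := by rw [Real.exp_nat_mul, Real.exp_log (by norm_num)]

open NumberField in
lemma house_mono {K : Type} [Field K] [NumberField K] (b g : K) (H : ℝ) (hH : 1 ≤ H) 
    (hb : 1 + house b ≤ H) (hg : house g ≤ H) (k M : ℕ) (hk : 1 ≤ k) (hkM : k ^ 2 ≤ M) (u v i j : ℕ)
    (hu : u ≤ M) (hv : v ≤ M) (hi : i ≤ 2 * k ^ 3) (hj : j ≤ k) :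
    house (((u:K) + v * b) ^ i * g ^ (v * j)) ≤ (H * M) ^ (3 * (M * k)) := by
  have hM : (1:ℝ) ≤ M := by exact_mod_cast (Nat.one_le_pow 2 k hk).trans hkM
  have hQ : 1 ≤ H * M := one_le_mul_of_one_le_of_one_le hH hM
  have h1 : house ((u:K) + v * b) ≤ H * M := by
    calc _ ≤ house ((u:K)) + house ((v:K) * b) := house_add_le _ _
      _ = u + v * house b := by
        rw [house_nat_mul]
        congr 1
        have := house_intCast (K := K) u
        simpa using this
      _ ≤ M + M * house b := by
        have := house_nonneg b
        gcongr
      _ = (1 + house b) * M := by ring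
      _ ≤ _ := by gcongr
  have hgQ : house g ≤ H * M := hg.trans (by nlinarith)
  calc _ ≤ house (((u:K) + v * b) ^ i) * house (g ^ (v * j)) := house_mul_le _ _
    _ ≤ house ((u:K) + v * b) ^ i * house g ^ (v * j) := by
      exact mul_le_mul (house_pow_le _ _) (house_pow_le _ _) (house_nonneg _) (pow_nonneg (house_nonneg _) _)
    _ ≤ (H * M) ^ i * (H * M) ^ (v * j) := by
      exact mul_le_mul (pow_le_pow_left₀ (house_nonneg _) h1 _) (pow_le_pow_left₀ (house_nonneg _) hgQ _)
        (pow_nonneg (house_nonneg _) _) (by positivity)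
    _ = (H * M) ^ (i + v * j) := by rw [pow_add]
    _ ≤ _ := by
      apply pow_le_pow_right₀ hQ
      have h2 : v * j ≤ M * k := Nat.mul_le_mul hv hj
      have h3 : k ^ 2 * k ≤ M * k := Nat.mul_le_mul_right _ hkM
      nlinarith

lemma integral_mono {K : Type} [Field K] [NumberField K] (b g : K) (d : ℕ) 
    (hb : IsIntegral ℤ (d * b)) (hg : IsIntegral ℤ (d * g)) (k M : ℕ) (hkM : k ^ 2 ≤ M) (u v i j : ℕ)
    (hv : v ≤ M) (hi : i ≤ 2 * k ^ 3) (hj : j ≤ k) :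
    IsIntegral ℤ ((d:K) ^ (3 * (M * k)) * (((u:K) + v * b) ^ i * g ^ (v * j))) := by
  have h2 : v * j ≤ M * k := Nat.mul_le_mul hv hj
  have h3 : k ^ 2 * k ≤ M * k := Nat.mul_le_mul_right _ hkM
  obtain ⟨e, he⟩ : ∃ e, 3 * (M * k) = e + i + v * j := ⟨3 * (M * k) - i - v * j, by nlinarith [Nat.sub_add_cancel (show i + v * j ≤ 3 * (M * k) by nlinarith), Nat.sub_sub (3 * (M*k)) i (v * j)]⟩
  have hnat : ∀ m : ℕ, IsIntegral ℤ (m : K) := fun m => by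
    have := isIntegral_algebraMap (R := ℤ) (A := K) (x := (m:ℤ))
    simpa using this
  have : (d:K) ^ (3 * (M * k)) * (((u:K) + v * b) ^ i * g ^ (v * j)) =
      (d:K) ^ e * ((d:K) * u + v * (d * b)) ^ i * (d * g) ^ (v * j) := by
    rw [he, pow_add, pow_add, mul_pow (d:K) g, show (d:K) * u + v * (d * b) = d * (u + v * b) by ring, mul_pow (d:K) (u + v*b)]
    ring
  rw [this]
  exact (((hnat d).pow e).mul ((((hnat d).mul (hnat u)).add ((hnat v).mul hb)).pow i)).mul (hg.pow _)

open NumberField in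
/-- The value of the auxiliary function at `u + v b`. -/
def auxVal {K : Type} [Field K] (b g : K) (k : ℕ) (p : Fin (2 * k ^ 3) × Fin k → 𝓞 K) (u v : ℕ) : K :=
  ∑ ij, (algebraMap (𝓞 K) K (p ij)) * (((u:K) + v * b) ^ (ij.1 : ℕ) * g ^ (v * (ij.2 : ℕ)))

open NumberField in
lemma siegelStep {K : Type} [Field K] [NumberField K] (b g : K) (d : ℕ) (hd : 0 < d)
    (hbi : IsIntegral ℤ (d * b)) (hgi : IsIntegral ℤ (d * g)) : 
    ∃ C : ℝ, 1 ≤ C ∧ ∀ H : ℝ, C ≤ H → (d:ℝ) ≤ H → 1 + house b ≤ H → house g ≤ H → 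
    ∀ k : ℕ, 1 ≤ k → ∃ p : Fin (2 * k ^ 3) × Fin k → 𝓞 K, p ≠ 0 ∧ 
      (∀ u < k ^ 2, ∀ v < k ^ 2, auxVal b g k p u v = 0) ∧ 
      ∀ ij, house (algebraMap (𝓞 K) K (p ij)) ≤ (H * (k ^ 2 : ℕ)) ^ (9 * k ^ 3) := by
  obtain ⟨C, hC1, hC⟩ := siegel K
  refine ⟨C, hC1, fun H hCH hdH hb hg k hk => ?_⟩
  have hH : 1 ≤ H := hC1.trans hCH
  have hk2 : 1 ≤ k ^ 2 := Nat.one_le_pow _ _ hk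
  have hk3 : 1 ≤ k ^ 3 := Nat.one_le_pow _ _ hk
  let a : Matrix (Fin (k ^ 2) × Fin (k ^ 2)) (Fin (2 * k ^ 3) × Fin k) (𝓞 K) := fun uv ij =>
    ⟨(d:K) ^ (3 * (k ^ 2 * k)) * (((uv.1:ℕ) + (uv.2 : ℕ) * b) ^ (ij.1 : ℕ) * g ^ ((uv.2:ℕ) * (ij.2 : ℕ))),
      integral_mono b g d hbi hgi k (k ^ 2) le_rfl _ _ _ _ uv.2.2.le ij.1.2.le ij.2.2.le⟩
  have haa : ∀ uv ij, algebraMap (𝓞 K) K (a uv ij) = 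
    (d:K) ^ (3 * (k ^ 2 * k)) * (((uv.1:ℕ) + (uv.2 : ℕ) * b) ^ (ij.1 : ℕ) * g ^ ((uv.2:ℕ) * (ij.2 : ℕ))) := 
    fun uv ij => rfl
  have hd0 : (d:K) ≠ 0 := by exact_mod_cast hd.ne'
  have hk2r : (1:ℝ) ≤ (k ^ 2 : ℕ) := by exact_mod_cast hk2
  have hQ : 1 ≤ H * (k ^ 2 : ℕ) := one_le_mul_of_one_le_of_one_le hH hk2r
  have ha0 : a ≠ 0 := by
    intro h
    have h1 := haa (⟨0, hk2⟩, ⟨0, hk2⟩) (⟨0, by omega⟩, ⟨0, hk⟩)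
    rw [h] at h1
    simp at h1
    exact pow_ne_zero _ hd0 h1.symm
  have hA : ∀ uv ij, house (algebraMap (𝓞 K) K (a uv ij)) ≤ (H * (k ^ 2 : ℕ)) ^ (6 * k ^ 3) := by
    intro uv ij
    rw [haa]
    have h1 := house_mono b g H hH hb hg k (k ^ 2) hk le_rfl uv.1 uv.2 ij.1 ij.2 uv.1.2.le uv.2.2.le ij.1.2.le ij.2.2.le
    calc _ ≤ house ((d:K) ^ (3 * (k ^ 2 * k))) * _ := house_mul_le _ _
      _ ≤ (H * (k ^ 2 : ℕ)) ^ (3 * (k ^ 2 * k)) * (H * (k ^ 2 : ℕ)) ^ (3 * (k ^ 2 * k)) := by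
        apply mul_le_mul _ h1 (house_nonneg _) (by positivity)
        refine (house_pow_le _ _).trans (pow_le_pow_left₀ (house_nonneg _) ?_ _)
        have := house_intCast (K := K) d
        have h3 : house (d:K) = d := by simpa using this
        rw [h3]
        nlinarith
      _ = _ := by rw [← pow_add]; congr 1; ring
  obtain ⟨ξ, h1, h2, h3⟩ := hC _ _ (k ^ 4) a _ (by positivity) (by simp; ring) (by simp; ring) ha0 hA
  refine ⟨ξ, h1, ?_, ?_⟩
  · intro u hu v hv
    have h4 := congrArg (algebraMap (𝓞 K) K) (congrFun h2 (⟨u, hu⟩, ⟨v, hv⟩))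
    simp only [Matrix.mulVec, dotProduct, map_sum, map_mul, haa, Pi.zero_apply, map_zero] at h4
    have h5 : (d:K) ^ (3 * (k ^ 2 * k)) * auxVal b g k ξ u v = 0 := by
      rw [← h4, auxVal, Finset.mul_sum]
      refine Finset.sum_congr rfl fun ij _ => ?_
      ring
    exact (mul_eq_zero.1 h5).resolve_left (pow_ne_zero _ hd0)
  · intro ij
    refine (h3 ij).trans ?_
    calc C * ((k ^ 4 : ℕ) * (H * (k ^ 2 : ℕ)) ^ (6 * k ^ 3)) 
        ≤ (H * (k ^ 2 : ℕ)) * ((H * (k ^ 2 : ℕ)) ^ 2 * (H * (k ^ 2 : ℕ)) ^ (6 * k ^ 3)) := by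
          gcongr
          · nlinarith
          · push_cast
            rw [show (k:ℝ) ^ 4 = 1 * k ^ 4 by ring, mul_pow, ← pow_mul]
            gcongr
            exact one_le_pow₀ hH
      _ = (H * (k ^ 2 : ℕ)) ^ (3 + 6 * k ^ 3) := by ring
      _ ≤ _ := pow_le_pow_right₀ hQ (by omega)


open NumberField in
/-- The auxiliary function. -/
def auxFun {K : Type} [Field K] (φ : K →+* ℂ) (k : ℕ) (p : Fin (2 * k ^ 3) × Fin k → 𝓞 K) (z : ℂ) : ℂ :=
  ∑ ij, φ (algebraMap (𝓞 K) K (p ij)) * (z ^ (ij.1 : ℕ) * 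
    Complex.exp (2 * Real.pi * Complex.I * z) ^ (ij.2 : ℕ))

open NumberField in
lemma auxFun_eq {K : Type} [Field K] (φ : K →+* ℂ) (b g : K) 
    (hbg : Complex.exp (2 * Real.pi * Complex.I * φ b) = φ g) (k : ℕ) 
    (p : Fin (2 * k ^ 3) × Fin k → 𝓞 K) (u v : ℕ) : 
    auxFun φ k p (u + v * φ b) = φ (auxVal b g k p u v) := by
  rw [auxFun, auxVal, map_sum]
  refine Finset.sum_congr rfl fun ij _ => ?_
  have h1 : Complex.exp (2 * Real.pi * Complex.I * (u + v * φ b)) = φ g ^ v := by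
    rw [← hbg, ← Complex.exp_nat_mul, mul_add, Complex.exp_add]
    have : Complex.exp (2 * Real.pi * Complex.I * u) = 1 := by
      rw [mul_comm]; exact Complex.exp_nat_mul_two_pi_mul_I u
    rw [this, one_mul]
    congr 1; ring
  rw [h1]
  simp only [map_mul, map_pow, map_add, map_natCast, pow_mul]

open NumberField in
lemma auxFun_bound {K : Type} [Field K] [NumberField K] (φ : K →+* ℂ) (k M : ℕ) (hk : 1 ≤ k) (hkM : k ^ 2 ≤ M)
    (H : ℝ) (hH : 2 ≤ H)
    (p : Fin (2 * k ^ 3) × Fin k → 𝓞 K) 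
    (hp : ∀ ij, house (algebraMap (𝓞 K) K (p ij)) ≤ (H * M) ^ (9 * (M * k)))
    (z : ℂ) (hz : ‖z‖ ≤ 5 * (H * M)) : 
    ‖auxFun φ k p z‖ ≤ (H * M) ^ (14 * (M * k)) * (25 * Real.exp (10 * Real.pi * H)) ^ (M * k) := by
  have hM : (1:ℝ) ≤ M := by exact_mod_cast (Nat.one_le_pow 2 k hk).trans hkM
  have hQ : 1 ≤ H * M := by nlinarith
  have hkk : k ^ 3 ≤ M * k := by nlinarith
  have hW1 : 1 ≤ M * k := by nlinarith [Nat.one_le_pow 3 k hk]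
  have hterm : ∀ ij : Fin (2 * k ^ 3) × Fin k, ‖φ (algebraMap (𝓞 K) K (p ij)) * (z ^ (ij.1 : ℕ) * 
    Complex.exp (2 * Real.pi * Complex.I * z) ^ (ij.2 : ℕ))‖ ≤ (H * M) ^ (9 * (M * k)) * 
      ((5 * (H * M)) ^ (2 * (M * k)) * Real.exp (10 * Real.pi * H) ^ (M * k)) := by
    intro ij
    rw [norm_mul, norm_mul, norm_pow, norm_pow]
    have h1 : ‖φ (algebraMap (𝓞 K) K (p ij))‖ ≤ (H * M) ^ (9 * (M * k)) :=
      (norm_embedding_le_house _ _).trans (hp ij)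
    have h2 : ‖z‖ ^ (ij.1 : ℕ) ≤ (5 * (H * M)) ^ (2 * (M * k)) := by
      refine (pow_le_pow_left₀ (norm_nonneg _) hz _).trans (pow_le_pow_right₀ (by linarith) ?_)
      have := ij.1.2
      omega
    have h3 : ‖Complex.exp (2 * Real.pi * Complex.I * z)‖ ^ (ij.2 : ℕ) ≤ Real.exp (10 * Real.pi * H) ^ (M * k) := by
      rw [pow_mul]
      have h4 : ‖Complex.exp (2 * Real.pi * Complex.I * z)‖ ≤ Real.exp (10 * Real.pi * H) ^ M := by
        refine (Complex.norm_exp_le_exp_norm _).trans ?_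
        rw [← Real.exp_nat_mul]
        apply Real.exp_le_exp.2
        simp only [norm_mul, Complex.norm_I, Complex.norm_real, Complex.norm_ofNat, mul_one, Real.norm_eq_abs, abs_of_pos Real.pi_pos]
        nlinarith [Real.pi_pos, mul_le_mul_of_nonneg_left hz Real.pi_pos.le]
      refine (pow_le_pow_left₀ (norm_nonneg _) h4 _).trans (pow_le_pow_right₀ ?_ ij.2.2.le)
      exact one_le_pow₀ (Real.one_le_exp (by positivity))
    gcongr
  rw [auxFun]
  refine (norm_sum_le_of_le _ (fun ij _ => hterm ij)).trans ?_
  rw [Finset.sum_const, Finset.card_univ, nsmul_eq_mul]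
  have hcard : ((Fintype.card (Fin (2 * k ^ 3) × Fin k) : ℕ) : ℝ) ≤ (H * M) ^ (3 * (M * k)) := by
    have h5 : (H * M) ^ 3 ≤ (H * M) ^ (3 * (M * k)) := pow_le_pow_right₀ hQ (by omega)
    refine le_trans ?_ h5
    have h6 : (k:ℝ) ^ 2 ≤ M := by exact_mod_cast hkM
    simp only [Fintype.card_prod, Fintype.card_fin]
    push_cast
    have h7 : (k:ℝ) ^ 4 ≤ M ^ 2 := by
      rw [show (k:ℝ) ^ 4 = (k ^ 2) ^ 2 by ring]; gcongr
    have h8 : (M:ℝ) ^ 2 ≤ (H * M) ^ 2 := by gcongr; nlinarith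
    have h9 : 2 ≤ H * M := by nlinarith
    calc (2 * (k:ℝ) ^ 3 * k) = 2 * k ^ 4 := by ring
      _ ≤ (H * M) * (H * M) ^ 2 := by gcongr; exact h7.trans h8
      _ = _ := by ring
  calc _ ≤ (H * M) ^ (3 * (M * k)) * ((H * M) ^ (9 * (M * k)) * 
      ((5 * (H * M)) ^ (2 * (M * k)) * Real.exp (10 * Real.pi * H) ^ (M * k))) := by gcongr
    _ = (H * M) ^ (14 * (M * k)) * (25 * Real.exp (10 * Real.pi * H)) ^ (M * k) := by
      rw [mul_pow 5 (H * M), mul_pow 25, pow_mul 5 2, show (5:ℝ)^2 = 25 by norm_num, 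
        show 14 * (M * k) = 3 * (M * k) + 9 * (M * k) + 2 * (M * k) by ring, pow_add, pow_add]
      ring

open NumberField in
lemma auxVal_lower {K : Type} [Field K] [NumberField K] (φ : K →+* ℂ) (b g : K) (d : ℕ) (hd : 0 < d)
    (hbi : IsIntegral ℤ (d * b)) (hgi : IsIntegral ℤ (d * g)) (H : ℝ) (hH : 2 ≤ H) (hdH : (d:ℝ) ≤ H)
    (hb : 1 + house b ≤ H) (hg : house g ≤ H) 
    (k M : ℕ) (hk : 1 ≤ k) (hkM : k ^ 2 ≤ M)
    (p : Fin (2 * k ^ 3) × Fin k → 𝓞 K) 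
    (hp : ∀ ij, house (algebraMap (𝓞 K) K (p ij)) ≤ (H * M) ^ (9 * (M * k)))
    (u v : ℕ) (hu : u ≤ M) (hv : v ≤ M) (hne : auxVal b g k p u v ≠ 0) :
    1 ≤ ‖φ (auxVal b g k p u v)‖ * ((H * M) ^ (3 + 18 * Module.finrank ℚ K)) ^ (M * k) := by
  have hM : (1:ℝ) ≤ M := by exact_mod_cast (Nat.one_le_pow 2 k hk).trans hkM
  have hQ : 1 ≤ H * M := by nlinarith
  have hkk : k ^ 3 ≤ M * k := by nlinarith
  have hW1 : 1 ≤ M * k := by nlinarith [Nat.one_le_pow 3 k hk]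
  have hd0 : (d:K) ≠ 0 := by exact_mod_cast hd.ne'
  have hdQ : (d:ℝ) ≤ H * M := by nlinarith
  have hcard : ((Fintype.card (Fin (2 * k ^ 3) × Fin k) : ℕ) : ℝ) ≤ (H * M) ^ (3 * (M * k)) := by
    have h5 : (H * M) ^ 3 ≤ (H * M) ^ (3 * (M * k)) := pow_le_pow_right₀ hQ (by omega)
    refine le_trans ?_ h5
    have h6 : (k:ℝ) ^ 2 ≤ M := by exact_mod_cast hkM
    simp only [Fintype.card_prod, Fintype.card_fin]
    push_cast
    have h7 : (k:ℝ) ^ 4 ≤ M ^ 2 := by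
      rw [show (k:ℝ) ^ 4 = (k ^ 2) ^ 2 by ring]; gcongr
    have h8 : (M:ℝ) ^ 2 ≤ (H * M) ^ 2 := by gcongr; nlinarith
    have h9 : 2 ≤ H * M := by nlinarith
    calc (2 * (k:ℝ) ^ 3 * k) = 2 * k ^ 4 := by ring
      _ ≤ (H * M) * (H * M) ^ 2 := by gcongr; exact h7.trans h8
      _ = _ := by ring
  set x : K := (d:K) ^ (3 * (M * k)) * auxVal b g k p u v with hx
  have hx0 : x ≠ 0 := mul_ne_zero (pow_ne_zero _ hd0) hne
  have hxi : IsIntegral ℤ x := by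
    rw [hx, auxVal, Finset.mul_sum]
    refine IsIntegral.sum _ fun ij _ => ?_
    rw [mul_left_comm]
    exact (RingOfIntegers.isIntegral_coe (p ij)).mul
      (integral_mono b g d hbi hgi k M hkM u v _ _ hv ij.1.2.le ij.2.2.le)
  have hval : house (auxVal b g k p u v) ≤ (H * M) ^ (15 * (M * k)) := by
    rw [auxVal]
    refine (house_sum_le_sum_house _ _).trans ?_
    have : ∀ ij ∈ (Finset.univ : Finset (Fin (2 * k ^ 3) × Fin k)), 
        house ((algebraMap (𝓞 K) K (p ij)) * (((u:K) + v * b) ^ (ij.1 : ℕ) * g ^ (v * (ij.2 : ℕ)))) ≤ 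
        (H * M) ^ (9 * (M * k)) * (H * M) ^ (3 * (M * k)) := by
      intro ij _
      refine (house_mul_le _ _).trans ?_
      exact mul_le_mul (hp ij) (house_mono b g H (by linarith) hb hg k M hk hkM u v _ _ hu hv ij.1.2.le ij.2.2.le)
        (house_nonneg _) (by positivity)
    refine (Finset.sum_le_sum this).trans ?_
    rw [Finset.sum_const, Finset.card_univ, nsmul_eq_mul]
    calc _ ≤ (H * M) ^ (3 * (M * k)) * ((H * M) ^ (9 * (M * k)) * (H * M) ^ (3 * (M * k))) := by gcongr
      _ = _ := by rw [← pow_add, ← pow_add]; congr 1; ring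
  have hhd : house (d:K) = d := by
    have := house_intCast (K := K) d
    simpa using this
  have hhx : house x ≤ (H * M) ^ (18 * (M * k)) := by
    calc _ ≤ house ((d:K) ^ (3 * (M * k))) * _ := house_mul_le _ _
      _ ≤ (H * M) ^ (3 * (M * k)) * (H * M) ^ (15 * (M * k)) := by
        refine mul_le_mul ?_ hval (house_nonneg _) (by positivity)
        refine (house_pow_le _ _).trans (pow_le_pow_left₀ (house_nonneg _) ?_ _)
        rw [hhd]; exact hdQ
      _ = _ := by rw [← pow_add]; congr 1; ring
  refine (liouville φ x hx0 hxi).trans ?_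
  have h1 : ‖φ x‖ ≤ (H * M) ^ (3 * (M * k)) * ‖φ (auxVal b g k p u v)‖ := by
    rw [hx, map_mul, norm_mul, map_pow, norm_pow, map_natCast, Complex.norm_natCast]
    gcongr
  have h2 : house x ^ (Module.finrank ℚ K - 1) ≤ (H * M) ^ (18 * (M * k) * Module.finrank ℚ K) := by
    rw [pow_mul]
    refine (pow_le_pow_left₀ (house_nonneg _) hhx _).trans (pow_le_pow_right₀ (one_le_pow₀ hQ) (by omega))
  calc _ ≤ ((H * M) ^ (3 * (M * k)) * ‖φ (auxVal b g k p u v)‖) * (H * M) ^ (18 * (M * k) * Module.finrank ℚ K) := by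
        refine mul_le_mul h1 h2 (pow_nonneg (house_nonneg _) _) (by positivity)
    _ = _ := by rw [← pow_mul]; ring

lemma auxFun_diff {K : Type} [Field K] (φ : K →+* ℂ) (k : ℕ) 
    (p : Fin (2 * k ^ 3) × Fin k → NumberField.RingOfIntegers K) : Differentiable ℂ (auxFun φ k p) := by
  unfold auxFun
  fun_prop

lemma auxVal_zero {K : Type} [Field K] [NumberField K] (b g : K) (k : ℕ) 
    (p : Fin (2 * k ^ 3) × Fin k → NumberField.RingOfIntegers K) (hg : Function.Injective (fun v : ℕ => g ^ v))
    (h : ∀ u v, auxVal b g k p u v = 0) : p = 0 := by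
  have h1 : ∀ v i, ∑ j : Fin k, algebraMap _ K (p (i, j)) * (g ^ v) ^ (j : ℕ) = 0 := by
    intro v
    let P : Polynomial K := ∑ i : Fin (2 * k ^ 3), Polynomial.monomial (i:ℕ) (∑ j : Fin k, algebraMap _ K (p (i, j)) * (g ^ v) ^ (j : ℕ))
    have hP : P = 0 := by
      apply Polynomial.eq_zero_of_infinite_isRoot
      refine (Set.infinite_range_of_injective (f := fun u : ℕ => (u:K) + v * b) ?_).mono ?_
      · intro u u' huu
        simpa using huu
      · rintro _ ⟨u, rfl⟩
        have := h u v
        rw [auxVal, Fintype.sum_prod_type] at this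
        simp only [Set.mem_ofPred_eq, Polynomial.IsRoot.def, P, Polynomial.eval_finsetSum, Polynomial.eval_monomial]
        rw [← this]
        refine Finset.sum_congr rfl fun i _ => ?_
        rw [Finset.sum_mul]
        refine Finset.sum_congr rfl fun j _ => ?_
        rw [← pow_mul]; ring
    intro i
    have := congrArg (fun q => Polynomial.coeff q (i:ℕ)) hP
    simpa [P, Polynomial.finsetSum_coeff, Polynomial.coeff_monomial, Fin.val_inj] using this
  funext ⟨i, j⟩
  let P : Polynomial K := ∑ j : Fin k, Polynomial.monomial (j:ℕ) (algebraMap _ K (p (i, j)))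
  have hP : P = 0 := by
    apply Polynomial.eq_zero_of_infinite_isRoot
    refine (Set.infinite_range_of_injective hg).mono ?_
    rintro _ ⟨v, rfl⟩
    simp only [Set.mem_ofPred_eq, Polynomial.IsRoot.def, P, Polynomial.eval_finsetSum, Polynomial.eval_monomial]
    exact h1 v i
  have := congrArg (fun q => Polynomial.coeff q (j:ℕ)) hP
  simpa [P, Polynomial.finsetSum_coeff, Polynomial.coeff_monomial, Fin.val_inj] using this


open NumberField in
lemma gelfond_core {K : Type} [Field K] [NumberField K] (φ : K →+* ℂ) (b g : K) 
    (hbg : Complex.exp (2 * Real.pi * Complex.I * φ b) = φ g) : ∃ q : ℚ, φ b = q := by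
  by_contra hirr
  push Not at hirr
  have hirr2 : ∀ (m : ℤ) (v v' : ℕ), (v:ℂ) * φ b = v' * φ b + m → v = v' := by
    intro m v v' h
    by_contra hne
    have h1 : ((v:ℂ) - v') ≠ 0 := by rw [sub_ne_zero]; exact_mod_cast hne
    apply hirr (m / ((v:ℚ) - v'))
    push_cast
    rw [eq_div_iff h1]
    linear_combination h
  have hg : Function.Injective (fun v : ℕ => g ^ v) := by
    intro v v' h
    have h1 := congrArg φ h
    simp only [map_pow, ← hbg, ← Complex.exp_nat_mul] at h1
    rw [Complex.exp_eq_exp_iff_exists_int] at h1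
    obtain ⟨m, hm⟩ := h1
    apply hirr2 m v v'
    have h2 := Complex.two_pi_I_ne_zero
    apply mul_left_cancel₀ h2
    linear_combination hm
  obtain ⟨d₁, hd₁, hb₁⟩ := IsAlgebraic.exists_integral_multiple
    ((IsFractionRing.isAlgebraic_iff ℤ ℚ K).2 (IsAlgebraic.of_finite ℚ b))
  obtain ⟨d₂, hd₂, hg₂⟩ := IsAlgebraic.exists_integral_multiple
    ((IsFractionRing.isAlgebraic_iff ℤ ℚ K).2 (IsAlgebraic.of_finite ℚ g))
  obtain ⟨d, hd, hbi, hgi⟩ : ∃ d : ℕ, 0 < d ∧ IsIntegral ℤ ((d:K) * b) ∧ IsIntegral ℤ ((d:K) * g) := by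
    refine ⟨(d₁ * d₂).natAbs, Int.natAbs_pos.2 (mul_ne_zero hd₁ hd₂), ?_, ?_⟩
    · obtain ⟨e, he⟩ : ∃ e : ℤ, (((d₁ * d₂).natAbs : ℤ)) = e * d₁ := by
        rcases Int.natAbs_eq (d₁ * d₂) with h | h
        · exact ⟨d₂, by rw [← h]; ring⟩
        · exact ⟨-d₂, by rw [← neg_eq_iff_eq_neg.2 h]; ring⟩
      have : (((d₁ * d₂).natAbs : ℕ) : K) = e * d₁ := by rw [← Int.cast_natCast, he, Int.cast_mul]
      rw [this, mul_assoc, ← zsmul_eq_mul, ← zsmul_eq_mul]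
      exact hb₁.smul e
    · obtain ⟨e, he⟩ : ∃ e : ℤ, (((d₁ * d₂).natAbs : ℤ)) = e * d₂ := by
        rcases Int.natAbs_eq (d₁ * d₂) with h | h
        · exact ⟨d₁, by rw [← h]⟩
        · exact ⟨-d₁, by rw [← neg_eq_iff_eq_neg.2 h]; ring⟩
      have : (((d₁ * d₂).natAbs : ℕ) : K) = e * d₂ := by rw [← Int.cast_natCast, he, Int.cast_mul]
      rw [this, mul_assoc, ← zsmul_eq_mul, ← zsmul_eq_mul]
      exact hg₂.smul e
  obtain ⟨C, hC1, hC⟩ := siegelStep b g d hd hbi hgi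
  obtain ⟨H, hH2, hHC, hHd, hHb, hHg, hHβ⟩ : ∃ H : ℝ, 2 ≤ H ∧ C ≤ H ∧ (d:ℝ) ≤ H ∧ 1 + house b ≤ H ∧ house g ≤ H
      ∧ 1 + ‖φ b‖ ≤ H := by
    refine ⟨2 + C + d + (1 + house b) + house g, ?_⟩
    have h1 := house_nonneg b
    have h2 := house_nonneg g
    have h3 := norm_embedding_le_house b φ
    have h4 : (0:ℝ) ≤ d := Nat.cast_nonneg d
    refine ⟨?_, ?_, ?_, ?_, ?_, ?_⟩ <;> linarith
  obtain ⟨k, hk, hasymp⟩ := asymp (25 * Real.exp (10 * Real.pi * H)) H (17 + 18 * Module.finrank ℚ K)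
  obtain ⟨p, hp0, hpz, hph⟩ := hC H hHC hHd hHb hHg k hk
  apply hp0
  have hall : ∀ M : ℕ, k ^ 2 ≤ M → ∀ u < M, ∀ v < M, auxVal b g k p u v = 0 := by
    intro M hM
    induction M, hM using Nat.le_induction with
    | base => exact hpz
    | succ M hkM ih =>
      intro u hu v hv
      by_contra hne
      have hM : (1:ℝ) ≤ M := by exact_mod_cast (Nat.one_le_pow 2 k hk).trans hkM
      have hQ : 1 ≤ H * M := by nlinarith
      have hp' : ∀ ij, house (algebraMap (𝓞 K) K (p ij)) ≤ (H * M) ^ (9 * (M * k)) := by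
        intro ij
        refine (hph ij).trans ?_
        have h1 : H * (k ^ 2 : ℕ) ≤ H * M := by gcongr
        refine (pow_le_pow_left₀ (by positivity) h1 _).trans (pow_le_pow_right₀ hQ ?_)
        nlinarith
      have hlow := auxVal_lower φ b g d hd hbi hgi H hH2 hHd hHb hHg k M hk hkM p hp' u v
        (by omega) (by omega) hne
      have hnorm : ∀ u v : ℕ, u ≤ M → v ≤ M → ‖(u:ℂ) + v * φ b‖ ≤ H * M := by
        intro u v hu hv
        have h1 : (u:ℝ) ≤ M := by exact_mod_cast hu
        have h2 : (v:ℝ) ≤ M := by exact_mod_cast hv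
        calc _ ≤ ‖(u:ℂ)‖ + ‖(v:ℂ) * φ b‖ := norm_add_le _ _
          _ = u + v * ‖φ b‖ := by rw [norm_mul, Complex.norm_natCast, Complex.norm_natCast]
          _ ≤ M + M * ‖φ b‖ := by gcongr
          _ = (1 + ‖φ b‖) * M := by ring
          _ ≤ _ := by gcongr
      let s : Finset ℂ := (Finset.range M ×ˢ Finset.range M).image (fun uv => (uv.1:ℂ) + uv.2 * φ b)
      have hs : s.card = M * M := by
        rw [Finset.card_image_of_injective, Finset.card_product, Finset.card_range]
        rintro ⟨u, v⟩ ⟨u', v'⟩ h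
        simp only at h
        have hv : v = v' := by
          apply hirr2 ((u':ℤ) - u)
          push_cast
          linear_combination h
        subst hv
        have : u = u' := by simpa using h
        rw [this]
      have hup := schwarz (auxFun φ k p) (auxFun_diff φ k p) s (H * M) _ (by linarith) (by
          intro w hw
          simp only [s, Finset.mem_image, Finset.mem_product, Finset.mem_range] at hw
          obtain ⟨⟨u, v⟩, ⟨hu, hv⟩, rfl⟩ := hw
          refine ⟨?_, hnorm u v hu.le hv.le⟩
          rw [auxFun_eq φ b g hbg, ih u hu v hv, map_zero]) 
        (fun z hz => auxFun_bound φ k M hk hkM H hH2 p hp' z hz) (u + v * φ b) 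
        (hnorm u v (by omega) (by omega))
      rw [auxFun_eq φ b g hbg, hs] at hup
      have hfin := hasymp M hkM
      have hMpos : M ≠ 0 := by rintro rfl; simp at hM; linarith
      have h3 := pow_lt_pow_left₀ hfin (by positivity) hMpos
      rw [← pow_mul, ← pow_mul, mul_comm k M] at h3
      have h4 : 1 ≤ ((H * M) ^ (14 * (M * k)) * (25 * Real.exp (10 * Real.pi * H)) ^ (M * k) * (1 / 2) ^ (M * M)) * 
          ((H * M) ^ (3 + 18 * Module.finrank ℚ K)) ^ (M * k) := 
        hlow.trans (mul_le_mul_of_nonneg_right hup (by positivity))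
      have h5 : ((H * M) ^ (14 * (M * k)) * (25 * Real.exp (10 * Real.pi * H)) ^ (M * k) * (1 / 2) ^ (M * M)) * 
          ((H * M) ^ (3 + 18 * Module.finrank ℚ K)) ^ (M * k) = 
          (25 * Real.exp (10 * Real.pi * H) * (H * M) ^ (17 + 18 * Module.finrank ℚ K)) ^ (M * k) / 2 ^ (M * M) := by
        rw [show 17 + 18 * Module.finrank ℚ K = 14 + (3 + 18 * Module.finrank ℚ K) by ring, pow_add _ 14, 
          mul_pow (25 * Real.exp (10 * Real.pi * H)), mul_pow ((H * M : ℝ) ^ 14), ← pow_mul _ 14, one_div, inv_pow]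
        ring
      rw [h5, le_div_iff₀ (by positivity), one_mul] at h4
      exact absurd h3 (not_lt.2 h4)
  exact auxVal_zero b g k p hg (fun u v => hall (k ^ 2 + u + v + 1) (by omega) u (by omega) v (by omega))

lemma gelfond (β : ℂ) (hβ : IsAlgebraic ℚ β) 
    (hγ : IsAlgebraic ℚ (Complex.exp (2 * Real.pi * Complex.I * β))) : ∃ q : ℚ, β = q := by
  let K := IntermediateField.adjoin ℚ ({β, Complex.exp (2 * Real.pi * Complex.I * β)} : Set ℂ)
  have hfin : FiniteDimensional ℚ K := by
    apply IntermediateField.finiteDimensional_adjoin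
    intro x hx
    rcases hx with rfl | rfl
    · exact hβ.isIntegral
    · exact hγ.isIntegral
  have : NumberField K := ⟨⟩
  exact gelfond_core (algebraMap K ℂ) ⟨β, IntermediateField.subset_adjoin _ _ (by simp)⟩
    ⟨Complex.exp (2 * Real.pi * Complex.I * β), IntermediateField.subset_adjoin _ _ (by simp)⟩ rfl


/-- The normalised exponential. -/
def ee (x : ℂ) : ℂ := Complex.exp (2 * (Real.pi : ℂ) * Complex.I * x)

lemma ee_add (x y : ℂ) : ee (x + y) = ee x * ee y := by
  rw [ee, mul_add, Complex.exp_add, ee, ee]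

lemma ee_ne_zero (x : ℂ) : ee x ≠ 0 := Complex.exp_ne_zero _

lemma ee_zero : ee 0 = 1 := by simp [ee]

lemma ee_zpow (x : ℂ) (m : ℤ) : ee x ^ m = ee (m * x) := by
  rw [ee, ee, ← Complex.exp_int_mul]; congr 1; ring

lemma ee_sum {ι : Type} (s : Finset ι) (f : ι → ℂ) : ee (∑ i ∈ s, f i) = ∏ i ∈ s, ee (f i) := by
  simp only [ee, Finset.mul_sum, Complex.exp_sum]

lemma expMap_apply (n : ℕ) (u : Fin n → ℂ) (l : Fin n) : expMap n u l = ee (u l) := rfl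

/-- Cast of an integer vector. -/
def vc {α : Type} (m : α → ℤ) : α → ℂ := fun i => (m i : ℂ)

/-- Cast of an integer matrix. -/
def cm {α β : Type} (A : Matrix α β ℤ) : Matrix α β ℂ := A.map (Int.castRingHom ℂ)

lemma cm_mul {α β γ : Type} [Fintype β] (A : Matrix α β ℤ) (B : Matrix β γ ℤ) : cm (A * B) = cm A * cm B :=
  Matrix.map_mul

lemma cm_one {α : Type} [DecidableEq α] : cm (1 : Matrix α α ℤ) = 1 := by
  simp [cm]

lemma cm_sub {α β : Type} (A B : Matrix α β ℤ) : cm (A - B) = cm A - cm B := by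
  ext i j; simp [cm]

lemma vc_vecMul {α β : Type} [Fintype α] (m : α → ℤ) (A : Matrix α β ℤ) : 
    vc (Matrix.vecMul m A) = Matrix.vecMul (vc m) (cm A) := by
  funext j
  simp [vc, cm, Matrix.vecMul, dotProduct]

lemma vc_dot_mulVec {α β : Type} [Fintype α] [Fintype β] (m : α → ℤ) (A : Matrix α β ℤ) (y : β → ℂ) :
    vc m ⬝ᵥ (cm A).mulVec y = vc (Matrix.vecMul m A) ⬝ᵥ y := by
  rw [Matrix.dotProduct_mulVec, vc_vecMul]

lemma prod_expMap (n : ℕ) (u : Fin n → ℂ) (m : Fin n → ℤ) : 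
    ∏ l, expMap n u l ^ (m l) = ee (vc m ⬝ᵥ u) := by
  simp only [expMap_apply, ee_zpow, dotProduct, ee_sum, vc]

lemma exists_log {n : ℕ} (z : Fin n → ℂ) (hz : ∀ i, z i ≠ 0) : ∃ u, expMap n u = z := by
  refine ⟨fun i => Complex.log (z i) / (2 * Real.pi * Complex.I), funext fun i => ?_⟩
  rw [expMap, mul_div_cancel₀ _ Complex.two_pi_I_ne_zero, Complex.exp_log (hz i)]

lemma closed_range {n r : ℕ} (a : Fin n → ℂ) (G : Matrix (Fin n) (Fin r) ℤ) (B : Matrix (Fin r) (Fin n) ℤ)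
    (hG : G * B * G = G) : ZClosedTorus n (Set.range fun y => expMap n (a + (cm G).mulVec y)) := by
  refine ⟨{p | ∀ y, eval (expMap n (a + (cm G).mulVec y)) p = 0}, ?_⟩
  ext z
  constructor
  · rintro ⟨y, rfl⟩
    exact ⟨fun i => ee_ne_zero _, fun p hp => hp y⟩
  · rintro ⟨hz, hp⟩
    obtain ⟨u, rfl⟩ := exists_log z hz
    have key : ∀ m : Fin n → ℤ, Matrix.vecMul m G = 0 → ee (vc m ⬝ᵥ u) = ee (vc m ⬝ᵥ a) := by
      intro m hm
      have h1 := hp (∏ l, X l ^ (m l).toNat - C (ee (vc m ⬝ᵥ a)) * ∏ l, X l ^ (-m l).toNat) (by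
        intro y
        have h2 := prod_expMap n (a + (cm G).mulVec y) m
        rw [dotProduct_add, vc_dot_mulVec, hm] at h2
        have h3 : vc (0 : Fin r → ℤ) ⬝ᵥ y = 0 := by simp [vc, dotProduct]
        rw [h3, add_zero] at h2
        simp only [map_sub, map_mul, map_prod, map_pow, eval_X, eval_C]
        rw [← h2, ← Finset.prod_mul_distrib, sub_eq_zero]
        refine Finset.prod_congr rfl fun l _ => ?_
        rw [expMap_apply, ← zpow_natCast, ← zpow_natCast, ← zpow_add₀ (ee_ne_zero _)]
        congr 1
        omega)
      simp only [map_sub, map_mul, map_prod, map_pow, eval_X, eval_C] at h1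
      have h4 : ∏ l, expMap n u l ^ (-m l).toNat ≠ 0 := 
        Finset.prod_ne_zero_iff.2 fun l _ => pow_ne_zero _ (ee_ne_zero _)
      apply mul_right_cancel₀ h4
      rw [← sub_eq_zero.1 h1, ← prod_expMap, ← Finset.prod_mul_distrib]
      refine Finset.prod_congr rfl fun l _ => ?_
      rw [expMap_apply, ← zpow_natCast, ← zpow_natCast, ← zpow_add₀ (ee_ne_zero _)]
      congr 1
      omega
    refine ⟨(cm B).mulVec (u - a), funext fun l => ?_⟩
    let N : Matrix (Fin n) (Fin n) ℤ := 1 - G * B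
    have hN : N = 1 - G * B := rfl
    have h5 := key (N l) (by
      have : (N * G) l = 0 := by rw [hN, Matrix.sub_mul, hG, Matrix.one_mul, sub_self]; rfl
      exact this)
    have h6 : ∀ w : Fin n → ℂ, vc (N l) ⬝ᵥ w = w l - ((cm G).mulVec ((cm B).mulVec w)) l := by
      intro w
      have : vc (N l) ⬝ᵥ w = (cm N).mulVec w l := rfl
      rw [this, hN, cm_sub, cm_one, cm_mul, Matrix.sub_mulVec, Matrix.one_mulVec, Matrix.mulVec_mulVec]
      rfl
    rw [h6, h6] at h5
    have h7 : (a + (cm G).mulVec ((cm B).mulVec (u - a))) l = 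
       (a l - ((cm G).mulVec ((cm B).mulVec a)) l) + ((cm G).mulVec ((cm B).mulVec u)) l := by
      simp only [Matrix.mulVec_sub, Pi.add_apply, Pi.sub_apply]
      ring
    change ee ((a + (cm G).mulVec ((cm B).mulVec (u - a))) l) = ee (u l)
    rw [h7, ee_add, ← h5, ← ee_add]
    congr 1
    ring

lemma irr_range {n r : ℕ} (a : Fin n → ℂ) (G : Matrix (Fin n) (Fin r) ℤ) : 
    IsIrrOf (ZClosedTorus n) (Set.range fun y => expMap n (a + (cm G).mulVec y)) := by
  refine ⟨Set.range_nonempty _, ?_⟩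
  rintro F F' ⟨P, rfl⟩ ⟨P', rfl⟩ hsub
  by_contra hcon
  push Not at hcon
  obtain ⟨h1, h2⟩ := hcon
  rw [Set.not_subset] at h1 h2
  obtain ⟨_, ⟨y₁, rfl⟩, h1⟩ := h1
  obtain ⟨_, ⟨y₂, rfl⟩, h2⟩ := h2
  simp only [Set.mem_ofPred_eq, not_and, not_forall] at h1 h2
  obtain ⟨p, hp, hp1⟩ := h1 (fun i => ee_ne_zero _)
  obtain ⟨q, hq, hq1⟩ := h2 (fun i => ee_ne_zero _)
  have hd : ∀ p : MvPolynomial (Fin n) ℂ, Differentiable ℂ 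
      (fun t : ℂ => eval (expMap n (a + (cm G).mulVec (y₁ + t • (y₂ - y₁)))) p) := by
    intro p
    simp only [eval_eq', expMap, Matrix.mulVec_add, Matrix.mulVec_smul, Pi.add_apply, Pi.smul_apply]
    fun_prop
  have ha : ∀ p : MvPolynomial (Fin n) ℂ, AnalyticOnNhd ℂ 
      (fun t : ℂ => eval (expMap n (a + (cm G).mulVec (y₁ + t • (y₂ - y₁)))) p) Set.univ := fun p =>
    (hd p).differentiableOn.analyticOnNhd isOpen_univ
  have h3 := AnalyticOnNhd.eq_zero_or_eq_zero_of_mul_eq_zero (ha p) (ha q) (by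
    intro t _
    rcases hsub ⟨y₁ + t • (y₂ - y₁), rfl⟩ with h | h
    · exact mul_eq_zero_of_left (h.2 p hp) _
    · exact mul_eq_zero_of_right _ (h.2 q hq)) isPreconnected_univ
  rcases h3 with h3 | h3
  · have := h3 0 trivial
    simp only [zero_smul, add_zero] at this
    exact hp1 this
  · have := h3 1 trivial
    simp only [one_smul, add_sub_cancel] at this
    exact hq1 this


/-- Truncation matrix. -/
def trunc (r k : ℕ) : Matrix (Fin r) (Fin r) ℤ := Matrix.diagonal fun j => if (j : ℕ) < k then 1 else 0

lemma trunc_mul (r i j : ℕ) (h : i ≤ j) : trunc r j * trunc r i = trunc r i := by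
  rw [trunc, trunc, Matrix.diagonal_mul_diagonal]
  congr 1
  funext l
  split_ifs <;> first | rfl | omega

lemma trunc_self (r : ℕ) : trunc r r = 1 := by
  rw [trunc, ← Matrix.diagonal_one]
  congr 1
  funext l
  simp

/-- The chain of torus translates. -/
def chainSet {n r : ℕ} (a : Fin n → ℂ) (A : Matrix (Fin n) (Fin r) ℤ) (k : ℕ) : Set (Fin n → ℂ) :=
  Set.range fun y => expMap n (a + (cm (A * trunc r k)).mulVec y)

lemma chain_closed {n r : ℕ} (a : Fin n → ℂ) (A : Matrix (Fin n) (Fin r) ℤ) (B : Matrix (Fin r) (Fin n) ℤ)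
    (hBA : B * A = 1) (k : ℕ) : ZClosedTorus n (chainSet a A k) := by
  apply closed_range a (A * trunc r k) B
  calc A * trunc r k * B * (A * trunc r k) = A * trunc r k * (B * A) * trunc r k := by
        simp only [Matrix.mul_assoc]
    _ = _ := by rw [hBA, Matrix.mul_one, Matrix.mul_assoc, trunc_mul r k k le_rfl]

lemma chain_strict {n r : ℕ} (a : Fin n → ℂ) (A : Matrix (Fin n) (Fin r) ℤ) (B : Matrix (Fin r) (Fin n) ℤ)
    (hBA : B * A = 1) (i j : ℕ) (hij : i < j) (hj : j ≤ r) : chainSet a A i ⊂ chainSet a A j := by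
  refine ⟨?_, ?_⟩
  · rintro _ ⟨y, rfl⟩
    refine ⟨(cm (trunc r i)).mulVec y, ?_⟩
    simp only [Matrix.mulVec_mulVec, ← cm_mul, Matrix.mul_assoc, trunc_mul r i j hij.le]
  · intro hsub
    let ii : Fin r := ⟨i, hij.trans_le hj⟩
    obtain ⟨y, hy⟩ := hsub ⟨Pi.single ii (1/2), rfl⟩
    simp only at hy
    have h1 := congrArg (fun z => ∏ l, z l ^ (B ii l)) hy
    simp only [prod_expMap, dotProduct_add, vc_dot_mulVec, ee_add] at h1
    have h2 := mul_left_cancel₀ (ee_ne_zero _) h1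
    have h3 : ∀ k, Matrix.vecMul (B ii) (A * trunc r k) = trunc r k ii := by
      intro k
      have : Matrix.vecMul (B ii) (A * trunc r k) = (B * (A * trunc r k)) ii := rfl
      rw [this, ← Matrix.mul_assoc, hBA, Matrix.one_mul]
    have h3' : ∀ k (w : Fin r → ℂ), vc (trunc r k ii) ⬝ᵥ w = if i < k then w ii else 0 := by
      intro k w
      simp only [vc, trunc, dotProduct, Matrix.diagonal_apply]
      rw [Finset.sum_eq_single ii]
      · by_cases h : i < k <;> simp [ii, h]
      · intro b _ hb
        simp [hb.symm]
      · simp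
    rw [h3, h3, h3', h3', if_neg (lt_irrefl i), if_pos hij, Pi.single_eq_same, ee_zero] at h2
    have : ee (1/2) = -1 := by
      rw [ee, ← Complex.exp_pi_mul_I]; congr 1; ring
    rw [this] at h2
    norm_num at h2

lemma dim_torus {n r : ℕ} (a : Fin n → ℂ) (A : Matrix (Fin n) (Fin r) ℤ) (B : Matrix (Fin r) (Fin n) ℤ)
    (hBA : B * A = 1) (T : Set (Fin n → ℂ)) (hT : ZClosedTorus n T) (hTi : IsIrrOf (ZClosedTorus n) T)
    (hsub : chainSet a A r ⊂ T) : ((r + 1 : ℕ) : ℕ∞) ≤ dimOf (ZClosedTorus n) T := by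
  apply le_sSup
  refine ⟨r + 1, rfl, fun i => if (i : ℕ) ≤ r then chainSet a A i else T, ?_, ?_⟩
  · intro i
    by_cases h : (i : ℕ) ≤ r
    · simp only [h, if_true]
      refine ⟨chain_closed a A B hBA _, irr_range a _, ?_⟩
      rcases h.lt_or_eq with h | h
      · exact (chain_strict a A B hBA _ _ h le_rfl).1.trans hsub.1
      · rw [h]; exact hsub.1
    · simp only [h, if_false]
      exact ⟨hT, hTi, le_rfl⟩
  · intro i j hij
    have hij' : (i:ℕ) < j := hij
    have hi : (i : ℕ) ≤ r := by omega
    simp only [hi, if_true]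
    by_cases h : (j : ℕ) ≤ r
    · simp only [h, if_true]
      exact chain_strict a A B hBA _ _ hij' h
    · simp only [h, if_false]
      rcases hi.lt_or_eq with h | h
      · exact (chain_strict a A B hBA _ _ h le_rfl).trans hsub
      · rw [h]; exact hsub

/-- Ideal of polynomials vanishing on a set. -/
def vid {n : ℕ} (S : Set (Fin n → ℂ)) : Ideal (MvPolynomial (Fin n) ℂ) where
  carrier := {p | ∀ z ∈ S, eval z p = 0}
  add_mem' := by
    intro p q hp hq z hz
    rw [map_add, hp z hz, hq z hz, add_zero]
  zero_mem' := by intro z _; simp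
  smul_mem' := by
    intro c p hp z hz
    rw [smul_eq_mul, map_mul, hp z hz, mul_zero]

lemma mem_vid {n : ℕ} (S : Set (Fin n → ℂ)) (p : MvPolynomial (Fin n) ℂ) : 
    p ∈ vid S ↔ ∀ z ∈ S, eval z p = 0 := Iff.rfl

lemma vid_prime {n : ℕ} (S : Set (Fin n → ℂ)) (hS : IsIrrOf (ZClosed n) S) : (vid S).IsPrime := by
  obtain ⟨⟨z, hz⟩, h⟩ := hS
  constructor
  · rw [Ideal.ne_top_iff_one]
    intro h1
    have := h1 z hz
    simp at this
  · intro p q hpq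
    have := h {z | ∀ p' ∈ ({p} : Set (MvPolynomial (Fin n) ℂ)), eval z p' = 0} 
      {z | ∀ p' ∈ ({q} : Set (MvPolynomial (Fin n) ℂ)), eval z p' = 0} ⟨_, rfl⟩ ⟨_, rfl⟩ (by
        intro z hz
        have := hpq z hz
        rw [map_mul] at this
        rcases mul_eq_zero.1 this with h | h
        · left; simpa using h
        · right; simpa using h)
    rcases this with h | h
    · left; intro z hz; simpa using h hz
    · right; intro z hz; simpa using h hz

lemma mem_of_vid {n : ℕ} (S : Set (Fin n → ℂ)) (hS : ZClosed n S) (z : Fin n → ℂ) : 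
    z ∈ S ↔ ∀ p ∈ vid S, eval z p = 0 := by
  obtain ⟨P, rfl⟩ := hS
  refine ⟨fun hz p hp => hp z hz, fun h p hp => h p fun z hz => hz p hp⟩

lemma eval_aeval_comp {m k : ℕ} (w : Fin k → ℂ) (σ : Fin m → MvPolynomial (Fin k) ℂ) (q : MvPolynomial (Fin m) ℂ) :
    eval w (aeval σ q) = eval (fun j => eval w (σ j)) q := by
  induction q using MvPolynomial.induction_on with
  | C c => simp
  | add p q hp hq => rw [map_add, map_add, hp, hq, map_add]
  | mul_X p i hp => rw [map_mul, map_mul, hp, map_mul, aeval_X, eval_X]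

lemma dim_le {n r : ℕ} (S : Set (Fin n → ℂ)) (σ : Fin r → MvPolynomial (Fin n) ℂ) 
    (ψ : Fin n → MvPolynomial (Fin r) ℂ) 
    (h : ∀ z ∈ S, ∀ l, eval (fun j => eval z (σ j)) (ψ l) = z l) : dimOf (ZClosed n) S ≤ r := by
  apply sSup_le
  rintro _ ⟨d, rfl, Z, hZ, hlt⟩
  have hp : ∀ i, (Ideal.comap (aeval σ : MvPolynomial (Fin r) ℂ →ₐ[ℂ] _) (vid (Z i))).IsPrime := by
    intro i
    have := vid_prime (Z i) (hZ i).2.1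
    exact Ideal.IsPrime.comap _
  let s : LTSeries (PrimeSpectrum (MvPolynomial (Fin r) ℂ)) := 
    { length := d
      toFun := fun i => ⟨_, hp i.rev⟩
      step := by
        intro i
        have hlt' := hlt i.succ.rev i.castSucc.rev (by rw [Fin.rev_lt_rev]; exact Fin.castSucc_lt_succ)
        rw [Set.mem_ofPred_eq]
        dsimp only
        rw [← PrimeSpectrum.asIdeal_lt_asIdeal]
        refine lt_of_le_of_ne ?_ ?_
        · intro p hp z hz
          exact hp z (hlt'.1 hz)
        · intro heq
          apply hlt'.2
          intro z hz
          rw [mem_of_vid _ (hZ _).1]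
          intro p hp
          have hev : ∀ w ∈ S, eval w (aeval σ (aeval ψ p)) = eval w p := by
            intro w hw
            rw [eval_aeval_comp, eval_aeval_comp]
            congr 2
            funext l
            exact h w hw l
          have hmem : aeval ψ p ∈ Ideal.comap (aeval σ : MvPolynomial (Fin r) ℂ →ₐ[ℂ] _) (vid (Z i.succ.rev)) := by
            intro w hw
            exact (hev w ((hZ _).2.2 hw)).trans (hp w hw)
          have h2 : Ideal.comap (aeval σ : MvPolynomial (Fin r) ℂ →ₐ[ℂ] _) (vid (Z i.succ.rev)) = 
            Ideal.comap (aeval σ : MvPolynomial (Fin r) ℂ →ₐ[ℂ] _) (vid (Z i.castSucc.rev)) := heq.symm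
          rw [h2] at hmem
          rw [← hev z ((hZ _).2.2 hz)]
          exact hmem z hz }
  have h1 : (d : WithBot ℕ∞) ≤ ringKrullDim (MvPolynomial (Fin r) ℂ) := Order.LTSeries.length_le_krullDim s
  rw [MvPolynomial.ringKrullDim_of_isNoetherianRing, ringKrullDim_eq_zero_of_field, zero_add] at h1
  simp at h1
  exact_mod_cast h1


/-- Integer linear forms that are constant on `S`. -/
def constL {n : ℕ} (S : Set (Fin n → ℂ)) : Submodule ℤ (Fin n → ℤ) where
  carrier := {m | ∀ z ∈ S, ∀ w ∈ S, vc m ⬝ᵥ z = vc m ⬝ᵥ w}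
  add_mem' := by
    intro p q hp hq z hz w hw
    have h : vc (p + q) = vc p + vc q := by funext i; simp [vc]
    rw [h, add_dotProduct, add_dotProduct, hp z hz w hw, hq z hz w hw]
  zero_mem' := by intro z _ w _; simp [vc, dotProduct]
  smul_mem' := by
    intro c p hp z hz w hw
    have h : vc (c • p) = (c:ℂ) • vc p := by funext i; simp [vc]
    rw [h, smul_dotProduct, smul_dotProduct, hp z hz w hw]

lemma constL_sat {n : ℕ} (S : Set (Fin n → ℂ)) (k : ℤ) (m : Fin n → ℤ) (hk : k ≠ 0) (h : k • m ∈ constL S) :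
    m ∈ constL S := by
  intro z hz w hw
  have h1 := h z hz w hw
  have h2 : vc (k • m) = (k:ℂ) • vc m := by funext i; simp [vc]
  rw [h2, smul_dotProduct, smul_dotProduct] at h1
  exact smul_right_injective _ (Int.cast_ne_zero.2 hk : (k:ℂ) ≠ 0) h1

lemma param {n r : ℕ} (S : Set (Fin n → ℂ)) (A : Matrix (Fin n) (Fin r) ℤ) (B : Matrix (Fin r) (Fin n) ℤ)
    (hL : ∀ m, m ∈ constL S ↔ Matrix.vecMul m A = 0) (hBA : B * A = 1) (a : Fin n → ℂ) (ha : a ∈ S) 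
    (z : Fin n → ℂ) (hz : z ∈ S) : a + (cm A).mulVec ((cm B).mulVec (z - a)) = z := by
  funext l
  let N : Matrix (Fin n) (Fin n) ℤ := 1 - A * B
  have hN : N = 1 - A * B := rfl
  have h1 : N l ∈ constL S := by
    rw [hL]
    have : (N * A) l = 0 := by rw [hN, Matrix.sub_mul, Matrix.mul_assoc, hBA, Matrix.one_mul, Matrix.mul_one, sub_self]; rfl
    exact this
  have h2 := h1 z hz a ha
  have h6 : ∀ w : Fin n → ℂ, vc (N l) ⬝ᵥ w = w l - ((cm A).mulVec ((cm B).mulVec w)) l := by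
    intro w
    have : vc (N l) ⬝ᵥ w = (cm N).mulVec w l := rfl
    rw [this, hN, cm_sub, cm_one, cm_mul, Matrix.sub_mulVec, Matrix.one_mulVec, Matrix.mulVec_mulVec]
    rfl
  rw [h6, h6] at h2
  simp only [Matrix.mulVec_sub, Pi.add_apply, Pi.sub_apply]
  linear_combination -h2

lemma eval_group {n r : ℕ} (A : Matrix (Fin n) (Fin r) ℤ) (a : Fin n → ℂ) (p : MvPolynomial (Fin n) ℂ) : 
    ∃ (s : Finset (Fin r → ℤ)) (c : (Fin r → ℤ) → ℂ), ∀ y, eval (expMap n (a + (cm A).mulVec y)) p = 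
      ∑ κ ∈ s, c κ * ee (vc κ ⬝ᵥ y) := by
  classical
  let zz : (Fin n →₀ ℕ) → (Fin n → ℤ) := fun m l => (m l : ℤ)
  let π : (Fin n →₀ ℕ) → (Fin r → ℤ) := fun m => Matrix.vecMul (zz m) A
  refine ⟨p.support.image π, fun κ => ∑ m ∈ p.support with π m = κ, coeff m p * ee (vc (zz m) ⬝ᵥ a), fun y => ?_⟩
  rw [eval_eq', ← Finset.sum_fiberwise_of_maps_to (s := p.support) (t := p.support.image π) (g := π) 
    (fun m hm => Finset.mem_image_of_mem _ hm)]
  refine Finset.sum_congr rfl fun κ _ => ?_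
  rw [Finset.sum_mul]
  refine Finset.sum_congr rfl fun m hm => ?_
  have hκ : π m = κ := (Finset.mem_filter.1 hm).2
  have h1 := prod_expMap n (a + (cm A).mulVec y) (zz m)
  rw [dotProduct_add, ee_add, vc_dot_mulVec] at h1
  simp only [zz, zpow_natCast] at h1
  rw [h1, ← hκ]
  simp only [π, zz]
  ring

lemma range_sub {n r : ℕ} (S : Set (Fin n → ℂ)) (hSc : ZClosed n S) (hSi : IsIrrOf (ZClosed n) S) 
    (A : Matrix (Fin n) (Fin r) ℤ) (B : Matrix (Fin r) (Fin n) ℤ)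
    (hL : ∀ m, m ∈ constL S ↔ Matrix.vecMul m A = 0) (hBA : B * A = 1) (a : Fin n → ℂ) (ha : a ∈ S)
    (p : MvPolynomial (Fin n) ℂ) (hp : ∀ z ∈ S, eval (expMap n z) p = 0) (y : Fin r → ℂ) : 
    eval (expMap n (a + (cm A).mulVec y)) p = 0 := by
  classical
  obtain ⟨s, c, hsc⟩ := eval_group A a p
  let f : (Fin r → ℤ) → MvPolynomial (Fin n) ℂ := fun κ => 
    C (2 * Real.pi * Complex.I) * ∑ l, C (vc (Matrix.vecMul κ B) l) * (X l - C (a l))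
  have hf : ∀ κ z, eval z (f κ) = 2 * Real.pi * Complex.I * (vc κ ⬝ᵥ (cm B).mulVec (z - a)) := by
    intro κ z
    rw [vc_dot_mulVec]
    simp [f, dotProduct]
  have key := expLin S (vid S) (vid_prime S hSi) (mem_vid S) (mem_of_vid S hSc) f s (by
    intro κ _ κ' _ hne c hmem
    apply hne
    have h1 : Matrix.vecMul (κ - κ') B ∈ constL S := by
      have h2 : ∀ z ∈ S, vc (Matrix.vecMul (κ - κ') B) ⬝ᵥ z = c / (2 * Real.pi * Complex.I) + vc (Matrix.vecMul (κ - κ') B) ⬝ᵥ a := by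
        intro z hz
        have h3 := hmem z hz
        rw [map_sub, map_sub, hf, hf, eval_C] at h3
        have h4 : vc (κ - κ') = vc κ - vc κ' := by funext i; simp [vc]
        have h5 := Complex.two_pi_I_ne_zero
        rw [← vc_dot_mulVec, ← vc_dot_mulVec, h4]
        rw [Matrix.mulVec_sub, dotProduct_sub, dotProduct_sub] at h3
        rw [sub_dotProduct, sub_dotProduct]
        apply mul_left_cancel₀ h5
        rw [mul_add, mul_div_cancel₀ _ h5]
        linear_combination h3
      intro z hz w hw
      rw [h2 z hz, h2 w hw]
    rw [hL, Matrix.vecMul_vecMul, hBA, Matrix.vecMul_one] at h1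
    exact sub_eq_zero.1 h1) (fun κ => C (c κ)) (by
    intro z hz
    have h1 := hp z hz
    rw [← param S A B hL hBA a ha z hz, hsc] at h1
    rw [← h1]
    refine Finset.sum_congr rfl fun κ _ => ?_
    rw [eval_C, hf]
    rfl)
  rw [hsc]
  refine Finset.sum_eq_zero fun κ hκ => ?_
  have := key κ hκ a ha
  rw [eval_C] at this
  rw [this, zero_mul]

lemma isAlg_dot {n : ℕ} (m : Fin n → ℤ) (a : Fin n → ℂ) (ha : ∀ i, IsAlgebraic ℚ (a i)) : 
    IsAlgebraic ℚ (vc m ⬝ᵥ a) := by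
  rw [← mem_algebraicClosure_iff]
  refine sum_mem fun i _ => mul_mem (intCast_mem _ _) (mem_algebraicClosure_iff.2 (ha i))

lemma isAlg_prod {n : ℕ} (m : Fin n → ℤ) (a : Fin n → ℂ) (ha : ∀ i, IsAlgebraic ℚ (a i)) : 
    IsAlgebraic ℚ (∏ l, a l ^ m l) := by
  rw [← mem_algebraicClosure_iff]
  refine prod_mem fun i _ => zpow_mem (mem_algebraicClosure_iff.2 (ha i)) _

lemma final_step {n r : ℕ} (T : Set (Fin n → ℂ)) (A : Matrix (Fin n) (Fin r) ℤ) (B : Matrix (Fin r) (Fin n) ℤ)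
    (hBA : B * A = 1) (a : Fin n → ℂ) (ha : ∀ i, IsAlgebraic ℚ (a i)) (t : Fin n → ℂ) (ht : t ∈ T) 
    (hta : ∀ i, IsAlgebraic ℚ (t i)) 
    (hT : T = Set.range fun y => expMap n (a + (cm A).mulVec y)) : IsTorsionTranslateOfSubtorus n T := by
  let N : Matrix (Fin n) (Fin n) ℤ := 1 - A * B
  have hN : N = 1 - A * B := rfl
  have hNA : ∀ l, Matrix.vecMul (N l) A = 0 := by
    intro l
    have : (N * A) l = 0 := by rw [hN, Matrix.sub_mul, Matrix.mul_assoc, hBA, Matrix.one_mul, Matrix.mul_one, sub_self]; rfl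
    exact this
  have h6 : ∀ l (w : Fin n → ℂ), vc (N l) ⬝ᵥ w = w l - ((cm A).mulVec ((cm B).mulVec w)) l := by
    intro l w
    have : vc (N l) ⬝ᵥ w = (cm N).mulVec w l := rfl
    rw [this, hN, cm_sub, cm_one, cm_mul, Matrix.sub_mulVec, Matrix.one_mulVec, Matrix.mulVec_mulVec]
    rfl
  have hq : ∀ l, ∃ q : ℚ, vc (N l) ⬝ᵥ a = q := by
    intro l
    apply gelfond _ (isAlg_dot _ _ ha)
    have h1 : ∏ i, t i ^ (N l i) = ee (vc (N l) ⬝ᵥ a) := by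
      rw [hT] at ht
      obtain ⟨y, rfl⟩ := ht
      have := prod_expMap n (a + (cm A).mulVec y) (N l)
      rw [dotProduct_add, vc_dot_mulVec, hNA] at this
      rw [this]
      congr 1
      simp [vc, dotProduct]
    have h2 := isAlg_prod (N l) t hta
    rw [h1] at h2
    exact h2
  choose q hq using hq
  have hal : ∀ l, a l = q l + ((cm A).mulVec ((cm B).mulVec a)) l := by
    intro l
    rw [← hq, h6]; ring
  have hprod : ∀ (y : Fin r → ℂ) l, ∏ j, ee (y j) ^ (A l j) = ee ((cm A).mulVec y l) := by
    intro y l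
    simp only [ee_zpow, ← ee_sum]
    rfl
  refine ⟨fun l => ee (q l), {z | ∃ x : Fin r → ℂ, (∀ j, x j ≠ 0) ∧ ∀ l, z l = ∏ j, x j ^ A l j}, ?_, ⟨r, A, rfl⟩, ?_⟩
  · intro l
    refine ⟨(q l).den, (q l).pos, ?_⟩
    have h1 := ee_zpow (q l) ((q l).den : ℤ)
    rw [zpow_natCast] at h1
    rw [h1]
    have h2 : (((q l).den : ℤ) : ℂ) * (q l : ℂ) = ((q l).num : ℂ) := by
      have := Rat.den_mul_eq_num (q l)
      exact_mod_cast congrArg (Rat.cast (K := ℂ)) this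
    rw [h2, ee]
    have := Complex.exp_int_mul_two_pi_mul_I (q l).num
    rw [← this]
    congr 1; ring
  · ext z
    constructor
    · intro hz
      rw [hT] at hz
      obtain ⟨y, rfl⟩ := hz
      refine ⟨fun l => ∏ j, ee ((y + (cm B).mulVec a) j) ^ A l j, ⟨fun j => ee ((y + (cm B).mulVec a) j), fun j => ee_ne_zero _, fun l => rfl⟩, ?_⟩
      funext l
      simp only [hprod]
      rw [← ee_add, expMap_apply, Matrix.mulVec_add, Pi.add_apply, Pi.add_apply, hal l]
      congr 1
      ring
    · rintro ⟨w, ⟨x, hx, hw⟩, rfl⟩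
      obtain ⟨y, rfl⟩ := exists_log x hx
      rw [hT]
      refine ⟨y - (cm B).mulVec a, ?_⟩
      funext l
      simp only [hw, expMap_apply, hprod]
      rw [← ee_add, Matrix.mulVec_sub, Pi.add_apply, Pi.sub_apply, hal l]
      congr 1
      ring

lemma isTorsion_main (n : ℕ) (S T : Set (Fin n → ℂ))
    (hSne : S.Nonempty)
    (hSclosed : ZClosedQbar n S) (hSirr : IsIrrOf (ZClosed n) S)
    (hTclosed : ZClosedTorusQbar n T) (hTirr : IsIrrOf (ZClosedTorus n) T)
    (hdim : dimOf (ZClosed n) S = dimOf (ZClosedTorus n) T)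
    (hsub : expMap n '' S ⊆ T) :
    IsTorsionTranslateOfSubtorus n T := by
  have hSc : ZClosed n S := by
    obtain ⟨P, _, h⟩ := hSclosed
    exact ⟨P, h⟩
  have hTc : ZClosedTorus n T := by
    obtain ⟨P, _, h⟩ := hTclosed
    exact ⟨P, h⟩
  obtain ⟨a, haS, haa⟩ : ∃ a ∈ S, ∀ i, IsAlgebraic ℚ (a i) := by
    obtain ⟨P, hP, rfl⟩ := hSclosed
    obtain ⟨z, hz⟩ := hSne
    obtain ⟨a, h1, h2, _⟩ := algpt P hP 1 z hz (by simp)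
    exact ⟨a, h2, h1⟩
  obtain ⟨t, htT, hta⟩ : ∃ t ∈ T, ∀ i, IsAlgebraic ℚ (t i) := by
    obtain ⟨P, hP, rfl⟩ := hTclosed
    obtain ⟨z, hz0, hz⟩ := hTirr.1
    obtain ⟨a, h1, h2, h3⟩ := algpt P hP (∏ i, X i) z hz (by
      simp only [map_prod, aeval_X]
      exact Finset.prod_ne_zero_iff.2 fun i _ => hz0 i)
    refine ⟨a, ⟨?_, h2⟩, h1⟩
    simp only [map_prod, aeval_X] at h3
    exact fun i => Finset.prod_ne_zero_iff.1 h3 i (Finset.mem_univ i)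
  obtain ⟨r, A, B, hL, hBA⟩ := lattice (constL S) (constL_sat S)
  have hchain : chainSet a A r = Set.range fun y => expMap n (a + (cm A).mulVec y) := by
    rw [chainSet, trunc_self, Matrix.mul_one]
  have hrange : chainSet a A r ⊆ T := by
    rw [hchain]
    rintro _ ⟨y, rfl⟩
    obtain ⟨P, hP⟩ := hTc
    rw [hP]
    refine ⟨fun i => ee_ne_zero _, fun p hp => ?_⟩
    apply range_sub S hSc hSirr A B hL hBA a haS
    intro z hz
    have := hsub ⟨z, hz, rfl⟩
    rw [hP] at this
    exact this.2 p hp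
  have hdimS : dimOf (ZClosed n) S ≤ r := by
    apply dim_le S (fun j => ∑ l, C (B j l : ℂ) * (X l - C (a l))) (fun l => C (a l) + ∑ j, C (A l j : ℂ) * X j)
    intro z hz l
    have := congrFun (param S A B hL hBA a haS z hz) l
    rw [← this]
    simp [cm, Matrix.mulVec, dotProduct, -Matrix.mulVec_mulVec]
  have hTeq : T = chainSet a A r := by
    by_contra hne
    have h1 := dim_torus a A B hBA T hTc hTirr (lt_of_le_of_ne hrange (Ne.symm hne))
    rw [← hdim] at h1
    have h2 := h1.trans hdimS
    have h3 : r + 1 ≤ r := by exact_mod_cast h2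
    omega
  exact final_step T A B hBA a haa t htT hta (hTeq.trans hchain)


/-- If `S ⊆ ℂ^n` is a nonempty irreducible Zariski closed subset defined over `ℚ̄`
and `T ⊆ (ℂ^*)^n` is an irreducible Zariski closed subset defined over `ℚ̄` with
`dim S = dim T` and `exp(S) ⊆ T`, then `T` is a torsion translate of a subtorus. -/
theorem torsion_translate_of_exp_subset (n : ℕ) (hn : 1 ≤ n)
    (S T : Set (Fin n → ℂ))
    (hSne : S.Nonempty)
    (hSclosed : ZClosedQbar n S) (hSirr : IsIrrOf (ZClosed n) S)
    (hTclosed : ZClosedTorusQbar n T) (hTirr : IsIrrOf (ZClosedTorus n) T)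
    (hdim : dimOf (ZClosed n) S = dimOf (ZClosedTorus n) T)
    (hsub : expMap n '' S ⊆ T) :
    IsTorsionTranslateOfSubtorus n T := by
  exact isTorsion_main n S T hSne hSclosed hSirr hTclosed hTirr hdim hsub
end
end
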